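/- arXiv:math/0301245 — 2 statements merged into one kernel-verified Lean document; each statement's English description precedes it below -/
import Mathlib

section
/- For every real z > 0 and every real x with 0 < x < r(z), the series Σ_{k≥1} T(x^k, z^k)/k converges absolutely, and the functional equation T(x,z) − zx + x = x · exp(Σ_{k≥1} T(x^k, z^k)/k) holds. -/
open SimpleGraph

/-- A rooted tree on vertex set `Fin n`: a connected acyclic simple graph
with a distinguished root vertex. -/
structure RTree (n : ℕ) where
  adj : SimpleGraph (Fin n)
  connected : adj.Connected
  acyclic : adj.IsAcyclic
  root : Fin n

/-- `v` is a leaf of the rooted tree `t`: a vertex of degree one other than the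
root, except that in the one-vertex tree the root counts as a leaf. -/
def IsLeafV {n : ℕ} (t : RTree n) (v : Fin n) : Prop :=
  n = 1 ∨ ((t.adj.neighborSet v).ncard = 1 ∧ v ≠ t.root)

/-- The number of leaves of a rooted tree. -/
noncomputable def numLeaves {n : ℕ} (t : RTree n) : ℕ :=
  Nat.card {v : Fin n // IsLeafV t v}

/-- Root-preserving isomorphism of rooted trees. -/
def treeSetoid (n : ℕ) : Setoid (RTree n) where
  r t t' := ∃ e : t.adj ≃g t'.adj, e t.root = t'.root
  iseqv := by
    constructor
    · intro t; exact ⟨RelIso.refl _, rfl⟩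
    · rintro t t' ⟨e, he⟩
      exact ⟨e.symm, by rw [← he]; exact e.symm_apply_apply t.root⟩
    · rintro a b c ⟨e, he⟩ ⟨f, hf⟩
      exact ⟨e.trans f, by simp [RelIso.trans_apply, he, hf]⟩

/-- `aCount n k` : the number of isomorphism classes of rooted trees with `n`
vertices and exactly `k` leaves. -/
noncomputable def aCount (n k : ℕ) : ℕ :=
  Nat.card (Quotient (Setoid.comap
    (Subtype.val : {t : RTree n // numLeaves t = k} → RTree n)
    (treeSetoid n)))

/-- The real bivariate generating function `T(x,z) = Σ_{n,k} a_{n,k} x^n z^k`. -/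
noncomputable def Treal (x z : ℝ) : ℝ :=
  ∑' p : ℕ × ℕ, (aCount p.1 p.2 : ℝ) * x ^ p.1 * z ^ p.2

/-- `r(ζ)`, the radius of convergence in `x` of `T(x,ζ)` for `ζ > 0`. -/
noncomputable def rFun (ζ : ℝ) : ℝ :=
  sSup {x : ℝ | 0 < x ∧
    Summable (fun p : ℕ × ℕ => (aCount p.1 p.2 : ℝ) * x ^ p.1 * ζ ^ p.2)}

/-- A finite rooted tree on an arbitrary vertex type. -/
structure RT where
  V : Type
  fin : Finite V
  G : SimpleGraph V
  conn : G.Connected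
  acyc : G.IsAcyclic
  root : V

attribute [instance] RT.fin

namespace RT

/-- Root preserving isomorphism. -/
def Iso (t t' : RT) : Prop := ∃ e : t.G ≃g t'.G, e t.root = t'.root

lemma Iso.refl (t : RT) : Iso t t := ⟨RelIso.refl _, rfl⟩

lemma Iso.symm {t t' : RT} (h : Iso t t') : Iso t' t := by
  obtain ⟨e, he⟩ := h
  exact ⟨e.symm, by rw [← he]; exact e.symm_apply_apply t.root⟩

lemma Iso.trans {a b c : RT} (h : Iso a b) (h' : Iso b c) : Iso a c := by
  obtain ⟨e, he⟩ := h
  obtain ⟨f, hf⟩ := h'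
  exact ⟨e.trans f, by simp [RelIso.trans_apply, he, hf]⟩

/-- leaf predicate -/
def Leaf (t : RT) (v : t.V) : Prop :=
  Nat.card t.V = 1 ∨ ((t.G.neighborSet v).ncard = 1 ∧ v ≠ t.root)

/-- number of vertices -/
noncomputable def size (t : RT) : ℕ := Nat.card t.V

/-- number of leaves -/
noncomputable def leaves (t : RT) : ℕ := Nat.card {v : t.V // t.Leaf v}

lemma Iso.size_eq {t t' : RT} (h : Iso t t') : t.size = t'.size := by
  obtain ⟨e, he⟩ := h
  exact Nat.card_congr e.toEquiv

lemma Iso.leaves_eq {t t' : RT} (h : Iso t t') : t.leaves = t'.leaves := by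
  have hs := h.size_eq
  obtain ⟨e, he⟩ := h
  refine Nat.card_congr (e.toEquiv.subtypeEquiv fun v => ?_)
  have h1 : t'.G.neighborSet (e v) = e '' t.G.neighborSet v := by
    ext w
    obtain ⟨u, rfl⟩ := e.surjective w
    simp only [mem_neighborSet, Set.mem_image, e.injective.eq_iff, exists_eq_right]
    exact e.map_rel_iff
  unfold size at hs
  unfold Leaf
  change _ ↔ _ ∨ (t'.G.neighborSet (e v)).ncard = 1 ∧ e v ≠ _
  rw [h1, Set.ncard_image_of_injective _ e.injective, hs, ← he, e.injective.ne_iff]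

/-- adjacency of the join -/
def joinAdj {ι : Type} (F : ι → RT) : Option (Σ i, (F i).V) → Option (Σ i, (F i).V) → Prop
  | none, none => False
  | none, some a => a.2 = (F a.1).root
  | some a, none => a.2 = (F a.1).root
  | some a, some b => ∃ i u v, (F i).G.Adj u v ∧ a = ⟨i, u⟩ ∧ b = ⟨i, v⟩

/-- graph of the join -/
def joinG {ι : Type} (F : ι → RT) : SimpleGraph (Option (Σ i, (F i).V)) where
  Adj := joinAdj F
  symm := ⟨by
    rintro (_ | a) (_ | b) h
    · exact h
    · exact h
    · exact h
    · obtain ⟨i, u, v, h, rfl, rfl⟩ := h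
      exact ⟨i, v, u, h.symm, rfl, rfl⟩⟩
  loopless := ⟨by
    rintro (_ | a) h
    · exact h
    · obtain ⟨i, u, v, h, rfl, h'⟩ := h
      cases h'
      exact h.ne rfl⟩

lemma joinG_none_some {ι : Type} (F : ι → RT) (i : ι) (a : (F i).V) :
    (joinG F).Adj none (some ⟨i, a⟩) ↔ a = (F i).root := Iff.rfl

lemma joinG_some_none {ι : Type} (F : ι → RT) (i : ι) (a : (F i).V) :
    (joinG F).Adj (some ⟨i, a⟩) none ↔ a = (F i).root := Iff.rfl

lemma joinG_some_some {ι : Type} (F : ι → RT) (i : ι) (a b : (F i).V) :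
    (joinG F).Adj (some ⟨i, a⟩) (some ⟨i, b⟩) ↔ (F i).G.Adj a b := by
  constructor
  · rintro ⟨j, u, v, h, h1, h2⟩
    cases h1
    cases h2
    exact h
  · intro h
    exact ⟨i, a, b, h, rfl, rfl⟩

lemma joinG_fst {ι : Type} (F : ι → RT) {i j : ι} {a : (F i).V} {b : (F j).V}
    (h : (joinG F).Adj (some ⟨i, a⟩) (some ⟨j, b⟩)) : i = j := by
  obtain ⟨k, u, v, h, h1, h2⟩ := h
  cases h1
  cases h2
  rfl

/-- inclusion of a branch -/
def joinHom {ι : Type} (F : ι → RT) (i : ι) : (F i).G →g joinG F where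
  toFun a := some ⟨i, a⟩
  map_rel' {a b} h := (joinG_some_some F i a b).2 h

lemma joinG_connected {ι : Type} (F : ι → RT) : (joinG F).Connected := by
  have key : ∀ v, (joinG F).Reachable v none := by
    rintro (_ | ⟨i, a⟩)
    · exact Reachable.refl _
    · have h1 : (joinG F).Reachable (some ⟨i, a⟩) (some ⟨i, (F i).root⟩) :=
        ((F i).conn.preconnected a (F i).root).map (joinHom F i)
      exact h1.trans (Adj.reachable ((joinG_some_none F i _).2 rfl))
  have : Nonempty (Option (Σ i, (F i).V)) := ⟨none⟩
  exact ⟨fun u v => (key u).trans (key v).symm⟩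

lemma joinG_card_edge {ι : Type} [Finite ι] (F : ι → RT) :
    Nat.card (joinG F).edgeSet ≤ Nat.card (Σ i, Option (F i).G.edgeSet) := by
  let f : (Σ i, Option (F i).G.edgeSet) → Sym2 (Option (Σ i, (F i).V)) := fun p =>
    match p with
    | ⟨i, none⟩ => s(none, some ⟨i, (F i).root⟩)
    | ⟨i, some e⟩ => Sym2.map (joinHom F i) e.1
  have hsub : (joinG F).edgeSet ⊆ Set.range f := by
    intro e
    induction e using Sym2.ind with
    | _ x y =>
      intro h
      rw [mem_edgeSet] at h
      rcases x with (_ | ⟨i, a⟩) <;> rcases y with (_ | ⟨j, b⟩)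
      · exact h.elim
      · have := (joinG_none_some F j b).1 h
        subst this
        exact ⟨⟨j, none⟩, rfl⟩
      · have := (joinG_some_none F i a).1 h
        subst this
        exact ⟨⟨i, none⟩, Sym2.eq_swap⟩
      · obtain rfl := joinG_fst F h
        have h2 := (joinG_some_some F i a b).1 h
        exact ⟨⟨i, some ⟨s(a, b), h2⟩⟩, rfl⟩
  calc Nat.card (joinG F).edgeSet ≤ Nat.card (Set.range f) := Nat.card_mono (Set.finite_range f) hsub
    _ ≤ _ := Finite.card_range_le f

lemma size_eq_edge (t : RT) : Nat.card t.V = Nat.card t.G.edgeSet + 1 :=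
  ((isTree_iff_connected_and_card (G := t.G)).1 ⟨t.conn, t.acyc⟩).2.symm

lemma card_join {ι : Type} [Fintype ι] (F : ι → RT) :
    Nat.card (Option (Σ i, (F i).V)) = 1 + ∑ i, (F i).size := by
  rw [Finite.card_option, Nat.card_sigma, add_comm]
  rfl

/-- join of a finite family of trees -/
def join {ι : Type} [Finite ι] (F : ι → RT) : RT where
  V := Option (Σ i, (F i).V)
  fin := inferInstance
  G := joinG F
  conn := joinG_connected F
  acyc := by
    have h1 := joinG_card_edge F
    have h2 := (joinG_connected F).card_vert_le_card_edgeSet_add_one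
    have := Fintype.ofFinite ι
    rw [card_join] at h2
    rw [Nat.card_sigma] at h1
    have h3 : ∀ i, Nat.card (Option (F i).G.edgeSet) = (F i).size := by
      intro i
      rw [Finite.card_option, size, size_eq_edge]
    simp only [h3] at h1
    refine ((isTree_iff_connected_and_card (G := joinG F)).2 ⟨joinG_connected F, ?_⟩).2
    rw [card_join]
    omega
  root := none

lemma size_join {ι : Type} [Fintype ι] (F : ι → RT) :
    (join F).size = 1 + ∑ i, (F i).size := card_join F

lemma leaf_join_none {ι : Type} [Finite ι] [Nonempty ι] (F : ι → RT) :
    ¬ (join F).Leaf none := by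
  rintro (h | h)
  · have := Fintype.ofFinite ι
    have h2 := size_join F
    unfold size at h2
    rw [h] at h2
    have i : ι := Classical.arbitrary ι
    have : 0 < (F i).size := by
      have : Nonempty (F i).V := ⟨(F i).root⟩
      exact Nat.card_pos
    have h3 : (F i).size ≤ ∑ i, (F i).size :=
      Finset.single_le_sum (f := fun i => (F i).size) (fun _ _ => Nat.zero_le _) (Finset.mem_univ i)
    unfold size at *
    omega
  · exact h.2 rfl

lemma card_join_ne_one {ι : Type} [Finite ι] [Nonempty ι] (F : ι → RT) :
    Nat.card (join F).V ≠ 1 := fun h => leaf_join_none F (Or.inl h)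

lemma branch_injective {ι : Type} (F : ι → RT) (i : ι) :
    Function.Injective (fun u : (F i).V => (some ⟨i, u⟩ : Option (Σ i, (F i).V))) := by
  intro a b h
  simpa using h

lemma leaf_join_some {ι : Type} [Finite ι] (F : ι → RT) (i : ι) (a : (F i).V) :
    (join F).Leaf (some ⟨i, a⟩) ↔ (F i).Leaf a := by
  have : Nonempty ι := ⟨i⟩
  have hL : (join F).Leaf (some ⟨i, a⟩) ↔ ((joinG F).neighborSet (some ⟨i, a⟩)).ncard = 1 := by
    constructor
    · rintro (h | h)
      · exact (card_join_ne_one F h).elim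
      · exact h.1
    · intro h
      exact Or.inr ⟨h, fun h => by cases h⟩
  rw [hL]
  by_cases ha : a = (F i).root
  · have h1 : (joinG F).neighborSet (some ⟨i, a⟩) =
        insert none ((fun u : (F i).V => (some ⟨i, u⟩ : Option (Σ i, (F i).V))) ''
          (F i).G.neighborSet a) := by
      ext w
      rcases w with (_ | ⟨j, b⟩)
      · simpa using (joinG_some_none F i a).2 ha
      · constructor
        · intro h
          obtain rfl := joinG_fst F h
          exact Or.inr ⟨b, (joinG_some_some F i a b).1 h, rfl⟩
        · rintro (h | ⟨u, hu, h⟩)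
          · cases h
          · cases h
            exact (joinG_some_some F i a u).2 hu
    rw [h1, Set.ncard_insert_of_notMem (by simp), Set.ncard_image_of_injective _ (branch_injective F i)]
    constructor
    · intro h
      left
      have h0 : (F i).G.neighborSet a = ∅ := by
        rw [← Set.ncard_eq_zero]; omega
      by_contra hc
      have : Nonempty (F i).V := ⟨a⟩
      have hp : 0 < Nat.card (F i).V := Nat.card_pos
      have : Nontrivial (F i).V := by
        rw [← Finite.one_lt_card_iff_nontrivial]; omega
      obtain ⟨u, hu⟩ := (F i).conn.preconnected.exists_adj_of_nontrivial a
      have : u ∈ (F i).G.neighborSet a := hu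
      rw [h0] at this
      exact this
    · rintro (h | h)
      · have : Subsingleton (F i).V := (Nat.card_eq_one_iff_unique.1 h).1
        have : (F i).G.neighborSet a = ∅ := by
          ext u
          simp only [mem_neighborSet, Set.mem_empty_iff_false, iff_false]
          intro h
          exact h.ne (Subsingleton.elim _ _)
        rw [this]
        simp
      · exact (h.2 ha).elim
  · have h1 : (joinG F).neighborSet (some ⟨i, a⟩) =
        ((fun u : (F i).V => (some ⟨i, u⟩ : Option (Σ i, (F i).V))) ''
          (F i).G.neighborSet a) := by
      ext w
      rcases w with (_ | ⟨j, b⟩)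
      · simpa using fun h => ha ((joinG_some_none F i a).1 h)
      · constructor
        · intro h
          obtain rfl := joinG_fst F h
          exact ⟨b, (joinG_some_some F i a b).1 h, rfl⟩
        · rintro ⟨u, hu, h⟩
          cases h
          exact (joinG_some_some F i a u).2 hu
    rw [h1, Set.ncard_image_of_injective _ (branch_injective F i)]
    constructor
    · intro h
      exact Or.inr ⟨h, ha⟩
    · rintro (h | h)
      · have : Subsingleton (F i).V := (Nat.card_eq_one_iff_unique.1 h).1
        exact (ha (Subsingleton.elim _ _)).elim
      · exact h.1

lemma leaves_join {ι : Type} [Fintype ι] [Nonempty ι] (F : ι → RT) :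
    (join F).leaves = ∑ i, (F i).leaves := by
  unfold leaves
  rw [← Nat.card_sigma]
  symm
  refine Nat.card_congr (Equiv.ofBijective
    (fun p : (Σ i, {v : (F i).V // (F i).Leaf v}) =>
      (⟨some ⟨p.1, p.2.1⟩, (leaf_join_some F _ _).2 p.2.2⟩ : {v // (join F).Leaf v})) ⟨?_, ?_⟩)
  · rintro ⟨i, a, ha⟩ ⟨j, b, hb⟩ h
    have h' := congrArg Subtype.val h
    have h2 := Option.some.inj h'
    cases h2
    rfl
  · rintro ⟨(_ | ⟨i, a⟩), h⟩
    · exact (leaf_join_none F h).elim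
    · exact ⟨⟨i, a, (leaf_join_some F i a).1 h⟩, rfl⟩

lemma leaves_join_empty {ι : Type} [Fintype ι] [IsEmpty ι] (F : ι → RT) :
    (join F).leaves = 1 := by
  have h1 : Nat.card (join F).V = 1 := by
    have := size_join F
    unfold size at this
    simpa using this
  have h2 : ∀ v, (join F).Leaf v := fun v => Or.inl h1
  unfold leaves
  rw [← h1]
  exact Nat.card_congr (Equiv.subtypeUnivEquiv h2)

lemma join_iso {ι ι' : Type} [Finite ι] [Finite ι'] (F : ι → RT) (F' : ι' → RT) (σ : ι ≃ ι')
    (h : ∀ i, Iso (F i) (F' (σ i))) : Iso (join F) (join F') := by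
  choose φ hφ using h
  let e : Option (Σ i, (F i).V) ≃ Option (Σ i, (F' i).V) :=
    Equiv.optionCongr (Equiv.sigmaCongr σ (fun i => (φ i).toEquiv))
  have he0 : e none = none := rfl
  have he1 : ∀ i a, e (some ⟨i, a⟩) = some ⟨σ i, φ i a⟩ := fun i a => rfl
  refine ⟨⟨e, ?_⟩, he0⟩
  change ∀ {a b : Option (Σ c, (F c).V)}, (joinG F').Adj (e a) (e b) ↔ (joinG F).Adj a b
  rintro (_ | ⟨i, a⟩) (_ | ⟨j, b⟩)
  · exact Iff.rfl
  · rw [he0, he1]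
    rw [joinG_none_some, joinG_none_some, ← hφ, (φ j).injective.eq_iff]
  · rw [he0, he1]
    rw [joinG_some_none, joinG_some_none, ← hφ, (φ i).injective.eq_iff]
  · rw [he1, he1]
    constructor
    · intro h
      have := σ.injective (joinG_fst F' h)
      subst this
      rw [joinG_some_some] at h ⊢
      exact (φ i).map_rel_iff.1 h
    · intro h
      have := joinG_fst F h
      subst this
      rw [joinG_some_some] at h ⊢
      exact (φ i).map_rel_iff.2 h

lemma iso_branch {ι ι' : Type} (F : ι → RT) (F' : ι' → RT) (e : joinG F ≃g joinG F')
    (he : e none = none) (i : ι) :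
    ∃ j, ∀ a, ∃ b, e (some ⟨i, a⟩) = some ⟨j, b⟩ := by
  have hsome : ∀ a, ∃ p, e (some ⟨i, a⟩) = some p := by
    intro a
    apply Option.ne_none_iff_exists'.1
    intro h
    rw [← he] at h
    cases e.injective h
  obtain ⟨⟨j, b⟩, hb⟩ := hsome (F i).root
  refine ⟨j, fun a => ?_⟩
  obtain ⟨w⟩ := (F i).conn.preconnected a (F i).root
  generalize (F i).root = r at w hb
  induction w with
  | nil => exact ⟨b, hb⟩
  | cons h w ih =>
    rename_i u v r
    obtain ⟨c, hc⟩ := ih hb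
    obtain ⟨⟨k, d⟩, hd⟩ := hsome u
    have h1 := e.map_rel_iff.2 ((joinG_some_some F i _ _).2 h)
    rw [hc, hd] at h1
    obtain rfl := joinG_fst F' h1
    exact ⟨d, hd⟩

lemma iso_of_join_iso {ι ι' : Type} [Finite ι] [Finite ι'] (F : ι → RT) (F' : ι' → RT)
    (h : Iso (join F) (join F')) : ∃ σ : ι ≃ ι', ∀ i, Iso (F i) (F' (σ i)) := by
  obtain ⟨e, he⟩ := h
  change joinG F ≃g joinG F' at e
  change e none = none at he
  have he' : e.symm none = none := by
    rw [← he]; exact e.symm_apply_apply _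
  choose σ φ hφ using iso_branch F F' e he
  choose τ ψ hψ using iso_branch F' F e.symm he'
  have hτσ : ∀ i, τ (σ i) = i := by
    intro i
    have h1 := hψ (σ i) (φ i (F i).root)
    rw [← hφ, e.symm_apply_apply] at h1
    exact (congrArg Sigma.fst (Option.some.inj h1)).symm
  have hστ : ∀ j, σ (τ j) = j := by
    intro i
    have h1 := hφ (τ i) (ψ i (F' i).root)
    rw [← hψ, e.apply_symm_apply] at h1
    exact (congrArg Sigma.fst (Option.some.inj h1)).symm
  refine ⟨⟨σ, τ, hτσ, hστ⟩, fun i => ?_⟩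
  change Iso (F i) (F' (σ i))
  have hbij : Function.Bijective (φ i) := by
    constructor
    · intro a b hab
      have h1 : e (some ⟨i, a⟩) = e (some ⟨i, b⟩) := by rw [hφ, hφ, hab]
      exact branch_injective F i (e.injective h1)
    · intro b
      have h1 := hψ (σ i) b
      generalize ψ (σ i) b = a at h1
      revert a
      rw [hτσ]
      intro a h1
      refine ⟨a, ?_⟩
      have h2 := hφ i a
      rw [← h1, e.apply_symm_apply] at h2
      exact (branch_injective F' _ h2).symm
  refine ⟨⟨Equiv.ofBijective (φ i) hbij, ?_⟩, ?_⟩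
  · intro a b
    change (F' (σ i)).G.Adj (φ i a) (φ i b) ↔ _
    rw [← joinG_some_some F', ← hφ, ← hφ, ← joinG_some_some F]
    exact e.map_rel_iff
  · change φ i (F i).root = _
    rw [← joinG_none_some F', ← hφ, ← he]
    exact e.map_rel_iff.2 ((joinG_none_some F i _).2 rfl)

/-- graph with root removed -/
def rem (t : RT) : SimpleGraph {v : t.V // v ≠ t.root} :=
  t.G.comap (Subtype.val)

lemma rem_adj (t : RT) (u v : {v : t.V // v ≠ t.root}) : t.rem.Adj u v ↔ t.G.Adj u.1 v.1 := Iff.rfl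

lemma exists_nbr (t : RT) (v : {v : t.V // v ≠ t.root}) :
    ∃ u : {v : t.V // v ≠ t.root}, t.G.Adj t.root u.1 ∧ t.rem.Reachable v u := by
  obtain ⟨v, hv⟩ := v
  obtain ⟨w⟩ := t.conn.preconnected v t.root
  have key : ∀ (a b : t.V) (w : t.G.Walk a b), b = t.root → ∀ ha : a ≠ t.root,
      ∃ u : {v : t.V // v ≠ t.root}, t.G.Adj t.root u.1 ∧ t.rem.Reachable ⟨a, ha⟩ u := by
    intro a b w
    induction w with
    | nil => intro h h'; exact (h' h).elim
    | cons h w ih =>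
      rename_i a c b
      intro hb ha
      by_cases hc : c = t.root
      · subst hc
        exact ⟨⟨a, ha⟩, h.symm, Reachable.refl _⟩
      · obtain ⟨u, hu, hr⟩ := ih hb hc
        exact ⟨u, hu, (Adj.reachable ((t.rem_adj ⟨a, ha⟩ ⟨c, hc⟩).2 h)).trans hr⟩
  exact key v _ w rfl hv

lemma nbr_unique (t : RT) (u v : {v : t.V // v ≠ t.root}) (hu : t.G.Adj t.root u.1)
    (hv : t.G.Adj t.root v.1) (h : t.rem.Reachable u v) : u = v := by
  classical
  obtain ⟨p⟩ := h
  let q := p.toPath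
  let f : t.rem →g t.G := ⟨Subtype.val, fun h => h⟩
  have hf : Function.Injective f := Subtype.val_injective
  have hq : (q.1.map f).IsPath := q.2.map hf
  have hr : t.root ∉ (q.1.map f).support := by
    rw [Walk.support_map]
    intro h
    obtain ⟨a, _, ha⟩ := List.mem_map.1 h
    exact a.2 ha
  have hc : (Walk.cons (show t.G.Adj t.root (f u) from hu) (q.1.map f)).IsPath := hq.cons hr
  have := t.acyc.path_unique ⟨_, hc⟩ (Path.singleton hv)
  have h2 := congrArg (fun p => p.1.length) this
  simp [Path.singleton] at h2
  exact h2.eq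

lemma exists_join (t : RT) : ∃ (ι : Type) (_ : Finite ι) (F : ι → RT), Iso t (join F) := by
  classical
  have hex : ∀ c : t.rem.ConnectedComponent, ∃ u : {v : t.V // v ≠ t.root},
      t.G.Adj t.root u.1 ∧ t.rem.connectedComponentMk u = c := by
    intro c
    induction c using ConnectedComponent.ind with
    | _ v =>
      obtain ⟨u, hu, h⟩ := t.exists_nbr v
      exact ⟨u, hu, (ConnectedComponent.sound h).symm⟩
  choose ρ hρ hρc using hex
  have hrem : t.rem.IsAcyclic := t.acyc.comap (⟨Subtype.val, fun h => h⟩ : t.rem →g t.G)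
    Subtype.val_injective
  let F : t.rem.ConnectedComponent → RT := fun c =>
    { V := {v // t.rem.connectedComponentMk v = c}
      fin := inferInstance
      G := c.toSimpleGraph
      conn := c.connected_toSimpleGraph
      acyc := hrem.induce _
      root := ⟨ρ c, hρc c⟩ }
  refine ⟨t.rem.ConnectedComponent, inferInstance, F, Iso.symm ?_⟩
  let e : Option (Σ c, (F c).V) ≃ t.V :=
    (Equiv.optionCongr (Equiv.sigmaFiberEquiv t.rem.connectedComponentMk)).trans
      (Equiv.optionSubtypeNe t.root)
  have he0 : e none = t.root := by simp [e]
  have he1 : ∀ c (a : (F c).V), e (some ⟨c, a⟩) = a.1.1 := by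
    intro c a
    rfl
  have hroot : ∀ c (a : (F c).V), t.G.Adj t.root a.1.1 ↔ a = (F c).root := by
    intro c a
    constructor
    · intro h
      apply Subtype.ext
      exact t.nbr_unique a.1 (ρ c) h (hρ c) (ConnectedComponent.exact (a.2.trans (hρc c).symm))
    · rintro rfl
      exact hρ c
  refine ⟨⟨e, ?_⟩, he0⟩
  change ∀ {a b : Option (Σ c, (F c).V)}, t.G.Adj (e a) (e b) ↔ (joinG F).Adj a b
  rintro (_ | ⟨i, a⟩) (_ | ⟨j, b⟩)
  · simp
  · rw [he0, he1, joinG_none_some, hroot]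
  · rw [he0, he1, joinG_some_none, adj_comm, hroot]
  · rw [he1, he1]
    constructor
    · intro h
      have h1 : t.rem.Adj a.1 b.1 := h
      have h2 : i = j := by
        rw [← a.2, ← b.2]
        exact ConnectedComponent.sound h1.reachable
      subst h2
      rw [joinG_some_some]
      exact h1
    · intro h
      have := joinG_fst F h
      subst this
      rw [joinG_some_some] at h
      exact h

end RT

/-- Regard a tree on `Fin n` as a tree. -/
def toRT (s : Σ n, RTree n) : RT where
  V := Fin s.1
  fin := inferInstance
  G := s.2.adj
  conn := s.2.connected
  acyc := s.2.acyclic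
  root := s.2.root

/-- isomorphism setoid on all trees on some `Fin n` -/
def allSetoid : Setoid (Σ n, RTree n) where
  r s s' := RT.Iso (toRT s) (toRT s')
  iseqv := ⟨fun _ => RT.Iso.refl _, fun h => h.symm, fun h k => h.trans k⟩

/-- isomorphism classes of rooted trees -/
abbrev TQ : Type := Quotient allSetoid

lemma exists_toRT (t : RT) : ∃ s, RT.Iso t (toRT s) := by
  obtain ⟨n, ⟨f⟩⟩ := Finite.exists_equiv_fin t.V
  let e : t.G ≃g t.G.map f.toEmbedding := SimpleGraph.Iso.map f t.G
  refine ⟨⟨n, ⟨t.G.map f.toEmbedding, e.connected_iff.1 t.conn, e.isAcyclic_iff.1 t.acyc, f t.root⟩⟩,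
    e, rfl⟩

/-- class of a tree -/
noncomputable def cls (t : RT) : TQ := Quotient.mk allSetoid (exists_toRT t).choose

lemma cls_eq_iff (t t' : RT) : cls t = cls t' ↔ RT.Iso t t' := by
  have h := (exists_toRT t).choose_spec
  have h' := (exists_toRT t').choose_spec
  constructor
  · intro e
    have e' : RT.Iso _ _ := Quotient.exact e
    exact (h.trans e').trans h'.symm
  · intro e
    exact Quotient.sound ((h.symm.trans e).trans h' : RT.Iso _ _)

lemma cls_toRT (s : Σ n, RTree n) : cls (toRT s) = Quotient.mk allSetoid s :=
  Quotient.sound ((exists_toRT (toRT s)).choose_spec.symm : RT.Iso _ _)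

/-- representative -/
noncomputable def rep (q : TQ) : RT := toRT q.out

lemma cls_rep (q : TQ) : cls (rep q) = q := by
  rw [rep, cls_toRT, Quotient.out_eq]

/-- size of a class -/
noncomputable def qsize (q : TQ) : ℕ := (rep q).size

/-- leaves of a class -/
noncomputable def qleaves (q : TQ) : ℕ := (rep q).leaves

lemma qsize_cls (t : RT) : qsize (cls t) = t.size :=
  RT.Iso.size_eq ((cls_eq_iff _ _).1 (cls_rep _))

lemma qleaves_cls (t : RT) : qleaves (cls t) = t.leaves :=
  RT.Iso.leaves_eq ((cls_eq_iff _ _).1 (cls_rep _))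

lemma toRT_size (s : Σ n, RTree n) : (toRT s).size = s.1 := by
  simp [RT.size, toRT]

lemma toRT_leaves (s : Σ n, RTree n) : (toRT s).leaves = numLeaves s.2 := by
  unfold RT.leaves numLeaves
  refine Nat.card_congr (Equiv.subtypeEquivRight fun v => ?_)
  unfold RT.Leaf IsLeafV
  have : Nat.card (toRT s).V = s.1 := toRT_size s
  rw [this]
  rfl

instance (n : ℕ) : Finite (RTree n) := by
  refine Finite.of_injective (fun t : RTree n => (t.adj, t.root)) ?_
  rintro ⟨a, _, _, b⟩ ⟨a', _, _, b'⟩ h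
  simp only [Prod.mk.injEq] at h
  obtain ⟨rfl, rfl⟩ := h
  rfl

lemma aCount_aux (n k : ℕ) : ∃ f : Quotient (Setoid.comap
    (Subtype.val : {t : RTree n // numLeaves t = k} → RTree n) (treeSetoid n)) →
    {q : TQ // (qsize q, qleaves q) = (n, k)}, Function.Bijective f := by
  refine ⟨Quotient.lift (fun t => ⟨cls (toRT ⟨n, t.1⟩), by
    rw [qsize_cls, qleaves_cls, toRT_size, toRT_leaves, t.2]⟩) ?_, ?_, ?_⟩
  · intro a b h
    apply Subtype.ext
    exact (cls_eq_iff _ _).2 h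
  · intro a b
    induction a using Quotient.ind
    induction b using Quotient.ind
    intro h
    exact Quotient.sound ((cls_eq_iff _ _).1 (congrArg Subtype.val h))
  · rintro ⟨q, hq⟩
    induction q using Quotient.ind with
    | _ s =>
      obtain ⟨m, s⟩ := s
      rw [← cls_toRT, qsize_cls, qleaves_cls, toRT_size, toRT_leaves] at hq
      simp only [Prod.mk.injEq] at hq
      obtain ⟨rfl, h2⟩ := hq
      exact ⟨Quotient.mk _ ⟨s, h2⟩, Subtype.ext (cls_toRT _)⟩

lemma finite_fiber (p : ℕ × ℕ) : Finite {q : TQ // (qsize q, qleaves q) = p} := by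
  obtain ⟨n, k⟩ := p
  obtain ⟨f, hf⟩ := aCount_aux n k
  exact Finite.of_surjective f hf.2

lemma aCount_eq (p : ℕ × ℕ) :
    aCount p.1 p.2 = Nat.card {q : TQ // (qsize q, qleaves q) = p} := by
  obtain ⟨n, k⟩ := p
  obtain ⟨f, hf⟩ := aCount_aux n k
  exact Nat.card_congr (Equiv.ofBijective f hf)

/-- weight -/
noncomputable def wt (x z : ℝ) (q : TQ) : ℝ := x ^ qsize q * z ^ qleaves q

lemma wt_pow (x z : ℝ) (k : ℕ) (q : TQ) : wt (x ^ k) (z ^ k) q = wt x z q ^ k := by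
  unfold wt
  rw [mul_pow, ← pow_mul, ← pow_mul, ← pow_mul, ← pow_mul, mul_comm k, mul_comm k]

lemma fiber_hasSum (x z : ℝ) (p : ℕ × ℕ) :
    HasSum (fun q : {q : TQ // (qsize q, qleaves q) = p} => wt x z q.1)
      ((aCount p.1 p.2 : ℝ) * x ^ p.1 * z ^ p.2) := by
  have := finite_fiber p
  have := Fintype.ofFinite {q : TQ // (qsize q, qleaves q) = p}
  have h := hasSum_fintype (fun q : {q : TQ // (qsize q, qleaves q) = p} => wt x z q.1)
  convert! h using 1
  have h2 : ∀ q : {q : TQ // (qsize q, qleaves q) = p}, wt x z q.1 = x ^ p.1 * z ^ p.2 := by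
    rintro ⟨q, hq⟩
    subst hq
    rfl
  simp only [h2, Finset.sum_const, Finset.card_univ, nsmul_eq_mul]
  rw [aCount_eq, Nat.card_eq_fintype_card, mul_assoc]

lemma summable_iff (x z : ℝ) (hx : 0 < x) (hz : 0 < z) :
    Summable (fun p : ℕ × ℕ => (aCount p.1 p.2 : ℝ) * x ^ p.1 * z ^ p.2) ↔
      Summable (wt x z) := by
  rw [← (Equiv.sigmaFiberEquiv (fun q : TQ => (qsize q, qleaves q))).summable_iff,
    summable_sigma_of_nonneg (fun _ => by simp only [Function.comp, wt]; positivity)]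
  have h1 : ∀ p : ℕ × ℕ, ∑' q : {q : TQ // (qsize q, qleaves q) = p}, wt x z q.1 =
      (aCount p.1 p.2 : ℝ) * x ^ p.1 * z ^ p.2 := fun p => (fiber_hasSum x z p).tsum_eq
  constructor
  · intro h
    exact ⟨fun p => (fiber_hasSum x z p).summable, h.congr fun p => (h1 p).symm⟩
  · intro h
    exact h.2.congr h1

lemma Treal_eq (x z : ℝ) (h : Summable (wt x z)) : Treal x z = ∑' q, wt x z q := by
  have h2 := ((Equiv.sigmaFiberEquiv (fun q : TQ => (qsize q, qleaves q))).hasSum_iff.2 h.hasSum)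
  have h3 := HasSum.sigma h2 (fun p => fiber_hasSum x z p)
  exact h3.tsum_eq

lemma exists_equiv_of_map_eq {α ι ι' : Type} [Fintype ι] [Fintype ι'] (f : ι → α) (g : ι' → α)
    (h : Finset.univ.val.map f = Finset.univ.val.map g) : ∃ σ : ι ≃ ι', ∀ i, f i = g (σ i) := by
  classical
  have hc : ∀ a, Nonempty ({i // f i = a} ≃ {i // g i = a}) := by
    intro a
    refine ⟨Fintype.equivOfCardEq ?_⟩
    have h1 := congrArg (Multiset.count a) h
    rw [Multiset.count_map, Multiset.count_map] at h1
    rw [Fintype.card_subtype, Fintype.card_subtype]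
    simpa [eq_comm, Finset.card_def] using h1
  let E := fun a => (hc a).some
  refine ⟨(Equiv.sigmaFiberEquiv f).symm.trans ((Equiv.sigmaCongrRight fun a => E a).trans
    (Equiv.sigmaFiberEquiv g)), fun i => ?_⟩
  exact ((E (f i)) ⟨i, rfl⟩).2.symm

/-- The family of a multiset. -/
noncomputable def fam (m : Multiset TQ) (i : Fin m.toList.length) : RT := rep m.toList[i]

/-- The join of a multiset of classes. -/
noncomputable def J (m : Multiset TQ) : TQ := cls (RT.join (fam m))

lemma fam_map (m : Multiset TQ) : Finset.univ.val.map (fun i => cls (fam m i)) = m := by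
  simp only [fam, cls_rep]
  rw [Fin.univ_val_map]
  conv_rhs => rw [← Multiset.coe_toList m]
  congr 1
  exact List.ofFn_getElem

lemma J_eq {ι : Type} [Fintype ι] (F : ι → RT) :
    J (Finset.univ.val.map (fun i => cls (F i))) = cls (RT.join F) := by
  obtain ⟨σ, hσ⟩ := exists_equiv_of_map_eq _ _
    (fam_map (Finset.univ.val.map (fun i => cls (F i))))
  exact (cls_eq_iff _ _).2 (RT.join_iso _ _ σ fun i => (cls_eq_iff _ _).1 (hσ i))

lemma J_bijective : Function.Bijective J := by
  constructor
  · intro m m' h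
    obtain ⟨σ, hσ⟩ := RT.iso_of_join_iso _ _ ((cls_eq_iff _ _).1 h)
    rw [← fam_map m, ← fam_map m']
    have h1 : (fun i => cls (fam m i)) = (fun i => cls (fam m' i)) ∘ σ := by
      funext i
      exact (cls_eq_iff _ _).2 (hσ i)
    rw [h1, ← Multiset.map_map]
    congr 1
    exact Multiset.map_univ_val_equiv σ
  · intro q
    obtain ⟨ι, _, F, h⟩ := RT.exists_join (rep q)
    have := Fintype.ofFinite ι
    refine ⟨Finset.univ.val.map (fun i => cls (F i)), ?_⟩
    rw [J_eq, ← (cls_eq_iff _ _).2 h, cls_rep]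

lemma sum_fam (f : TQ → ℕ) (m : Multiset TQ) : ∑ i, f (cls (fam m i)) = (m.map f).sum := by
  conv_rhs => rw [← fam_map m]
  rw [Multiset.map_map]
  rfl

lemma qsize_J (m : Multiset TQ) : qsize (J m) = 1 + (m.map qsize).sum := by
  rw [J, qsize_cls, RT.size_join, ← sum_fam]
  simp only [qsize_cls]

lemma qleaves_J (m : Multiset TQ) (hm : m ≠ 0) : qleaves (J m) = (m.map qleaves).sum := by
  have : Nonempty (Fin m.toList.length) := by
    refine ⟨⟨0, ?_⟩⟩
    rw [Multiset.length_toList]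
    exact Multiset.card_pos.2 hm
  rw [J, qleaves_cls, RT.leaves_join, ← sum_fam]
  simp only [qleaves_cls]

lemma qleaves_J_zero : qleaves (J 0) = 1 := by
  have : IsEmpty (Fin (0 : Multiset TQ).toList.length) := by
    simp only [Multiset.toList_zero, List.length_nil]
    infer_instance
  rw [J, qleaves_cls, RT.leaves_join_empty]

lemma prod_map_pow_aux (x : ℝ) (f : TQ → ℕ) (m : Multiset TQ) :
    (m.map (fun q => x ^ f q)).prod = x ^ (m.map f).sum := by
  induction m using Multiset.induction_on with
  | empty => simp
  | cons a m ih => simp [ih, pow_add]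

lemma wt_J (x z : ℝ) (m : Multiset TQ) (hm : m ≠ 0) :
    wt x z (J m) = x * (m.map (wt x z)).prod := by
  unfold wt
  rw [qsize_J, qleaves_J m hm, Multiset.prod_map_mul, prod_map_pow_aux,
    prod_map_pow_aux, pow_add, pow_one, mul_assoc]

lemma wt_J_zero (x z : ℝ) : wt x z (J 0) = x * z := by
  unfold wt
  rw [qsize_J, qleaves_J_zero]
  simp

lemma hasSum_supp {α : Type} [DecidableEq α] (w : α → ℝ) (h0 : ∀ a, 0 ≤ w a) (h1 : ∀ a, w a < 1)
    (S : Finset α) :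
    HasSum (fun m : {m : Multiset α // ∀ a ∈ m, a ∈ S} => (m.1.map w).prod)
      (∏ a ∈ S, (1 - w a)⁻¹) := by
  induction S using Finset.induction_on with
  | empty =>
    have hu : ∀ m : {m : Multiset α // ∀ a ∈ m, a ∈ (∅ : Finset α)}, m = ⟨0, by simp⟩ := by
      rintro ⟨m, hm⟩
      apply Subtype.ext
      apply Multiset.eq_zero_of_forall_notMem
      intro a ha
      simpa using hm a ha
    have h := hasSum_single (f := fun m : {m : Multiset α // ∀ a ∈ m, a ∈ (∅ : Finset α)} =>
      (m.1.map w).prod) ⟨0, by simp⟩ (fun m hm => (hm (hu m)).elim)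
    simpa using h
  | insert b S hb ih =>
    let e : ℕ × {m : Multiset α // ∀ a ∈ m, a ∈ S} ≃
        {m : Multiset α // ∀ a ∈ m, a ∈ insert b S} :=
      { toFun := fun p => ⟨Multiset.replicate p.1 b + p.2.1, by
          intro a ha
          rcases Multiset.mem_add.1 ha with h | h
          · rw [Multiset.eq_of_mem_replicate h]; simp
          · exact Finset.mem_insert_of_mem (p.2.2 a h)⟩
        invFun := fun m => (m.1.count b, ⟨m.1.filter (· ≠ b), by
          intro a ha
          rw [Multiset.mem_filter] at ha
          exact (Finset.mem_insert.1 (m.2 a ha.1)).resolve_left ha.2⟩)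
        left_inv := by
          rintro ⟨k, m, hm⟩
          have hbm : b ∉ m := fun h => hb (hm b h)
          ext1
          · simp [Multiset.count_eq_zero_of_notMem hbm]
          · apply Subtype.ext
            simp only [Multiset.filter_add]
            rw [Multiset.filter_eq_nil.2, Multiset.filter_eq_self.2, zero_add]
            · intro a ha h
              exact hbm (h ▸ ha)
            · intro a ha h
              exact h (Multiset.eq_of_mem_replicate ha)
        right_inv := by
          rintro ⟨m, hm⟩
          apply Subtype.ext
          simp only
          rw [← Multiset.filter_eq', add_comm]
          have := Multiset.filter_add_not (fun a => a ≠ b) m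
          simpa using this }
    rw [← e.hasSum_iff, Finset.prod_insert hb]
    have hg := hasSum_geometric_of_lt_one (h0 b) (h1 b)
    have hnn : ∀ m : Multiset α, 0 ≤ (m.map w).prod := fun m =>
      Multiset.prod_nonneg (by
        intro a ha
        obtain ⟨c, _, rfl⟩ := Multiset.mem_map.1 ha
        exact h0 c)
    have hs : Summable (fun p : ℕ × {m : Multiset α // ∀ a ∈ m, a ∈ S} =>
        w b ^ p.1 * (p.2.1.map w).prod) :=
      hg.summable.mul_of_nonneg ih.summable (fun n => pow_nonneg (h0 b) n) (fun m => hnn m.1)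
    have := hg.mul ih hs
    convert! this using 1
    funext p
    simp [e]

lemma hasSum_multiset {α : Type} (w : α → ℝ) (h0 : ∀ a, 0 ≤ w a) (h1 : ∀ a, w a < 1)
    (hw : Summable w) (hF : Summable (fun m : Multiset α => (m.map w).prod)) :
    ∑' m : Multiset α, (m.map w).prod = Real.exp (∑' a, -Real.log (1 - w a)) := by
  classical
  have hlog : Summable (fun a => -Real.log (1 - w a)) := by
    have := Real.summable_log_one_add_of_summable hw.neg
    simpa [sub_eq_add_neg] using this.neg
  have hnn : ∀ m : Multiset α, 0 ≤ (m.map w).prod := fun m =>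
    Multiset.prod_nonneg (by
      intro a ha
      obtain ⟨c, _, rfl⟩ := Multiset.mem_map.1 ha
      exact h0 c)
  have hlim1 : Filter.Tendsto (fun S : Finset α => ∏ a ∈ S, (1 - w a)⁻¹) Filter.atTop
      (nhds (Real.exp (∑' a, -Real.log (1 - w a)))) := by
    have := (Real.continuous_exp.tendsto _).comp hlog.hasSum
    refine this.congr fun S => ?_
    simp only [Function.comp]
    rw [Real.exp_sum]
    refine Finset.prod_congr rfl fun a _ => ?_
    rw [Real.exp_neg, Real.exp_log (by linarith [h1 a])]
  have hlim2 : Filter.Tendsto (fun S : Finset α => ∑' m : Multiset α,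
      Set.indicator {m : Multiset α | ∀ a ∈ m, a ∈ S} (fun m => (m.map w).prod) m) Filter.atTop
      (nhds (∑' m : Multiset α, (m.map w).prod)) := by
    refine tendsto_tsum_of_dominated_convergence hF ?_ ?_
    · intro m
      refine tendsto_const_nhds.congr' ?_
      filter_upwards [Filter.eventually_ge_atTop m.toFinset] with S hS
      rw [Set.indicator_of_mem]
      intro a ha
      exact hS (Multiset.mem_toFinset.2 ha)
    · refine Filter.Eventually.of_forall fun S m => ?_
      rw [Real.norm_of_nonneg (Set.indicator_nonneg (fun m _ => hnn m) m)]
      exact Set.indicator_le_self' (fun m _ => hnn m) m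
  have heq : ∀ S : Finset α, ∑' m : Multiset α,
      Set.indicator {m : Multiset α | ∀ a ∈ m, a ∈ S} (fun m => (m.map w).prod) m =
        ∏ a ∈ S, (1 - w a)⁻¹ := by
    intro S
    rw [← tsum_subtype]
    exact (hasSum_supp w h0 h1 S).tsum_eq
  simp only [heq] at hlim2
  exact tendsto_nhds_unique hlim2 hlim1

/-- Summability over multisets from summability over trees. -/
lemma multiset_sum {α : Type} (w : α → ℝ) (h0 : ∀ q, 0 < w q) (hw : Summable w)
    (J : Multiset α → α) (hJb : Function.Bijective J) (x z : ℝ) (hx0 : 0 < x)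
    (hJ0 : w (J 0) = x * z) (hJ1 : ∀ m, m ≠ 0 → w (J m) = x * (m.map w).prod) :
    HasSum (fun m : Multiset α => x * (m.map w).prod) (∑' q, w q + (x - z * x)) ∧
    Summable (fun m : Multiset α => (m.map w).prod) ∧ ∀ q, w q < 1 := by
  classical
  let E : Multiset α ≃ α := Equiv.ofBijective J hJb
  have hJ : Summable (fun m => w (J m)) := E.summable_iff.2 hw
  have hJsum : ∑' m, w (J m) = ∑' q, w q := E.tsum_eq w
  have hrel : ∀ m : Multiset α, x * (m.map w).prod =
      w (J m) + (if m = 0 then x - z * x else 0) := by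
    intro m
    split_ifs with hm
    · subst hm
      rw [hJ0]
      simp
      ring
    · rw [hJ1 m hm, add_zero]
  have hsingle : HasSum (fun m : Multiset α => if m = 0 then x - z * x else 0) (x - z * x) :=
    hasSum_ite_eq 0 _
  have hxF : HasSum (fun m : Multiset α => x * (m.map w).prod)
      (∑' q, w q + (x - z * x)) := by
    rw [← hJsum]
    simp only [hrel]
    exact hJ.hasSum.add hsingle
  have hF : Summable (fun m : Multiset α => (m.map w).prod) :=
    (summable_mul_left_iff hx0.ne').1 hxF.summable
  have h1 : ∀ q, w q < 1 := by
    intro q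
    have hinj : Function.Injective (fun n : ℕ => Multiset.replicate n q) := by
      intro a b h
      simpa using congrArg Multiset.card h
    have hs := hF.comp_injective hinj
    have hs' : Summable (fun n : ℕ => w q ^ n) := hs.congr fun n => by simp
    have := summable_geometric_iff_norm_lt_one.1 hs'
    rwa [Real.norm_of_nonneg (h0 q).le] at this
  exact ⟨hxF, hF, h1⟩

/-- The Pólya-type functional equation
`T(x,z) − zx + x = x·exp(Σ_{k≥1} T(x^k,z^k)/k)`, together with the absolute
convergence of the series in the exponent, for `0 < x < r(z)`, `z > 0`. -/
theorem functional_equation (z x : ℝ) (hz : 0 < z) (hx0 : 0 < x)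
    (hxr : x < rFun z) :
    Summable (fun k : ℕ => |Treal (x ^ (k + 1)) (z ^ (k + 1)) / (k + 1)|) ∧
    Treal x z - z * x + x =
      x * Real.exp (∑' k : ℕ, Treal (x ^ (k + 1)) (z ^ (k + 1)) / (k + 1)) := by
  classical
  have hne : {x : ℝ | 0 < x ∧
      Summable (fun p : ℕ × ℕ => (aCount p.1 p.2 : ℝ) * x ^ p.1 * z ^ p.2)}.Nonempty := by
    by_contra hc
    rw [Set.not_nonempty_iff_eq_empty] at hc
    unfold rFun at hxr
    rw [hc, Real.sSup_empty] at hxr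
    linarith
  obtain ⟨y, ⟨hy0, hy⟩, hxy⟩ := exists_lt_of_lt_csSup hne hxr
  have hsy := (summable_iff y z hy0 hz).1 hy
  set w := wt x z with hwdef
  have h0 : ∀ q, 0 < w q := fun q => by simp only [hwdef, wt]; positivity
  have hw : Summable w := by
    refine Summable.of_nonneg_of_le (fun q => (h0 q).le) (fun q => ?_) hsy
    simp only [hwdef, wt]
    gcongr
  obtain ⟨hxF, hF, h1⟩ := multiset_sum w h0 hw J J_bijective x z hx0 (wt_J_zero x z)
    (fun m hm => wt_J x z m hm)
  have hexp := hasSum_multiset w (fun q => (h0 q).le) h1 hw hF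
  have hlog : Summable (fun a => -Real.log (1 - w a)) := by
    have := Real.summable_log_one_add_of_summable hw.neg
    simpa [sub_eq_add_neg] using this.neg
  have hinner : ∀ q, HasSum (fun k : ℕ => w q ^ (k + 1) / ((k : ℝ) + 1)) (-Real.log (1 - w q)) :=
    fun q => Real.hasSum_pow_div_log_of_abs_lt_one (by rw [abs_of_pos (h0 q)]; exact h1 q)
  have hprod : Summable (fun p : TQ × ℕ => w p.1 ^ (p.2 + 1) / ((p.2 : ℝ) + 1)) := by
    refine (summable_prod_of_nonneg (fun p => ?_)).2 ⟨fun q => (hinner q).summable, ?_⟩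
    · have := (h0 p.1).le
      simp only [Pi.zero_apply]
      positivity
    · exact hlog.congr fun q => (hinner q).tsum_eq.symm
  have hwk : ∀ k : ℕ, Summable (wt (x ^ (k + 1)) (z ^ (k + 1))) := by
    intro k
    refine Summable.of_nonneg_of_le (fun q => ?_) (fun q => ?_) hw
    · rw [wt_pow]
      exact pow_nonneg (h0 q).le _
    · rw [wt_pow]
      exact pow_le_of_le_one (h0 q).le (h1 q).le (Nat.succ_ne_zero k)
  have hT : ∀ k : ℕ, Treal (x ^ (k + 1)) (z ^ (k + 1)) / ((k : ℝ) + 1) =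
      ∑' q, w q ^ (k + 1) / ((k : ℝ) + 1) := by
    intro k
    rw [Treal_eq _ _ (hwk k), tsum_div_const]
    simp only [wt_pow, hwdef]
  have hswap : Summable (fun p : ℕ × TQ => w p.2 ^ (p.1 + 1) / ((p.1 : ℝ) + 1)) :=
    (Equiv.prodComm ℕ TQ).summable_iff.2 hprod
  have hsum : Summable (fun k : ℕ => Treal (x ^ (k + 1)) (z ^ (k + 1)) / ((k : ℝ) + 1)) :=
    hswap.prod.congr fun k => (hT k).symm
  refine ⟨hsum.abs, ?_⟩
  have htot : ∑' k : ℕ, Treal (x ^ (k + 1)) (z ^ (k + 1)) / ((k : ℝ) + 1) =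
      ∑' q, -Real.log (1 - w q) := by
    rw [tsum_congr hT]
    have hcomm := Summable.tsum_comm (f := fun (q : TQ) (k : ℕ) => w q ^ (k + 1) / ((k : ℝ) + 1))
      hprod
    refine hcomm.trans ?_
    exact tsum_congr fun q => (hinner q).tsum_eq
  rw [htot, ← hexp, ← tsum_mul_left, hxF.tsum_eq, Treal_eq x z hw]
  ring
end

section
/- (Lemma 3) The function ζ ↦ r(ζ) is real-analytic on (0,∞); for every z > 0 the boundary value a(z) := T(r(z), z) = Σ_{n,k} a_{n,k} r(z)^n z^k satisfies a(z) = 1 + r(z)(z − 1), and r(z) · exp(1 + (z−1)·r(z) + h(r(z), z)) = 1. -/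
open SimpleGraph

/-- The real version of `h(x,z) = Σ_{k≥2} T(x^k,z^k)/k`. -/
noncomputable def hReal (x z : ℝ) : ℝ :=
  ∑' k : ℕ, Treal (x ^ (k + 2)) (z ^ (k + 2)) / ((k : ℝ) + 2)

open SimpleGraph

/-- rooted trees on arbitrary finite types -/
structure GT where
  V : Type
  fin : Finite V
  G : SimpleGraph V
  conn : G.Connected
  acyc : G.IsAcyclic
  root : V

attribute [instance] GT.fin

namespace GT

instance gtSetoid : Setoid GT where
  r t t' := ∃ e : t.G ≃g t'.G, e t.root = t'.root
  iseqv := by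
    constructor
    · intro t; exact ⟨RelIso.refl _, rfl⟩
    · rintro t t' ⟨e, he⟩
      exact ⟨e.symm, by rw [← he]; exact e.symm_apply_apply t.root⟩
    · rintro a b c ⟨e, he⟩ ⟨f, hf⟩
      exact ⟨e.trans f, by simp [RelIso.trans_apply, he, hf]⟩

theorem equiv_def (s t : GT) : s ≈ t ↔ ∃ e : s.G ≃g t.G, e s.root = t.root := Iff.rfl

noncomputable def size (t : GT) : ℕ := Nat.card t.V

def IsLf (t : GT) (v : t.V) : Prop :=
  Nat.card t.V = 1 ∨ ((t.G.neighborSet v).ncard = 1 ∧ v ≠ t.root)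

noncomputable def leaves (t : GT) : ℕ := Nat.card {v : t.V // t.IsLf v}

theorem isLf_iso {s t : GT} (e : s.G ≃g t.G) (he : e s.root = t.root) (v : s.V) :
    s.IsLf v ↔ t.IsLf (e v) := by
  unfold IsLf
  have h1 : Nat.card s.V = Nat.card t.V := Nat.card_congr e.toEquiv
  have h2 : (s.G.neighborSet v).ncard = (t.G.neighborSet (e v)).ncard := by
    exact Nat.card_congr (e.mapNeighborSet v)
  rw [h1, h2, ← he]
  simp

theorem leaves_congr {s t : GT} (h : s ≈ t) : s.leaves = t.leaves := by
  obtain ⟨e, he⟩ := h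
  exact Nat.card_congr (e.toEquiv.subtypeEquiv (fun v => isLf_iso e he v))

theorem size_congr {s t : GT} (h : s ≈ t) : s.size = t.size := by
  obtain ⟨e, he⟩ := h
  exact Nat.card_congr e.toEquiv

theorem size_pos (t : GT) : 0 < t.size := by
  have : Nonempty t.V := ⟨t.root⟩
  exact Nat.card_pos

theorem leaves_le (t : GT) : t.leaves ≤ t.size :=
  Nat.card_le_card_of_injective (Subtype.val) Subtype.val_injective

/-! join -/
inductive JAdj {ι : Type} (f : ι → GT) :
    Option (Σ i, (f i).V) → Option (Σ i, (f i).V) → Prop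
  | rt (i : ι) : JAdj f none (some ⟨i, (f i).root⟩)
  | rt' (i : ι) : JAdj f (some ⟨i, (f i).root⟩) none
  | inn (i : ι) (u v : (f i).V) (h : (f i).G.Adj u v) : JAdj f (some ⟨i, u⟩) (some ⟨i, v⟩)

def JG {ι : Type} (f : ι → GT) : SimpleGraph (Option (Σ i, (f i).V)) where
  Adj := JAdj f
  symm := ⟨fun a b h => by
    cases h with
    | rt i => exact .rt' i
    | rt' i => exact .rt i
    | inn i u v h => exact .inn i v u h.symm⟩
  loopless := ⟨fun a h => by
    cases h with
    | inn i u v h => exact (f i).G.loopless.irrefl _ h⟩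

theorem JG_inn {ι : Type} (f : ι → GT) (i : ι) (u v : (f i).V) :
    (JG f).Adj (some ⟨i, u⟩) (some ⟨i, v⟩) ↔ (f i).G.Adj u v := by
  constructor
  · intro h; cases h with
    | inn i u v h => exact h
  · exact fun h => .inn i u v h

theorem JG_root {ι : Type} (f : ι → GT) (i : ι) (u : (f i).V) :
    (JG f).Adj none (some ⟨i, u⟩) ↔ u = (f i).root := by
  constructor
  · intro h; cases h; rfl
  · rintro rfl; exact .rt i

theorem JG_root' {ι : Type} (f : ι → GT) (i : ι) (u : (f i).V) :
    (JG f).Adj (some ⟨i, u⟩) none ↔ u = (f i).root := by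
  rw [SimpleGraph.adj_comm, JG_root]

def inclHom {ι : Type} (f : ι → GT) (i : ι) : (f i).G →g JG f where
  toFun v := some ⟨i, v⟩
  map_rel' h := .inn i _ _ h

theorem JG_conn {ι : Type} (f : ι → GT) : (JG f).Connected := by
  rw [SimpleGraph.connected_iff_exists_forall_reachable]
  refine ⟨none, ?_⟩
  rintro (_ | ⟨i, v⟩)
  · exact Reachable.refl _
  · have h1 : (JG f).Adj none (some ⟨i, (f i).root⟩) := .rt i
    exact h1.reachable.trans (((f i).conn.preconnected (f i).root v).map (inclHom f i))

theorem JG_acyc {ι : Type} [Finite ι] (f : ι → GT) : (JG f).IsAcyclic := by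
  have hc := JG_conn f
  have := Fintype.ofFinite ι
  refine (isTree_iff_connected_and_card.2 ⟨hc, le_antisymm ?_ hc.card_vert_le_card_edgeSet_add_one⟩).isAcyclic
  let g : (Σ i, (f i).G.edgeSet) ⊕ ι → (JG f).edgeSet := fun x => match x with
    | .inl ⟨i, e⟩ => ⟨(inclHom f i).mapEdgeSet e, ((inclHom f i).mapEdgeSet e).2⟩
    | .inr i => ⟨s(none, some ⟨i, (f i).root⟩), JAdj.rt i⟩
  have hg : Function.Surjective g := by
    rintro ⟨e, he⟩
    induction e using Sym2.ind with
    | _ a b =>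
    have he' : JAdj f a b := he
    cases he' with
    | rt i => exact ⟨.inr i, rfl⟩
    | rt' i => exact ⟨.inr i, Subtype.ext Sym2.eq_swap⟩
    | inn i u v h => exact ⟨.inl ⟨i, ⟨s(u, v), h⟩⟩, rfl⟩
  have h1 := Nat.card_le_card_of_surjective g hg
  have h2 : ∀ i, Nat.card (f i).G.edgeSet + 1 = Nat.card (f i).V := fun i =>
    (isTree_iff_connected_and_card.1 ⟨(f i).conn, (f i).acyc⟩).2
  rw [Nat.card_sum, Nat.card_sigma] at h1
  rw [Finite.card_option, Nat.card_sigma, ← Finset.sum_congr rfl (fun i _ => h2 i),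
    Finset.sum_add_distrib]
  simpa using h1

def join {ι : Type} [Finite ι] (f : ι → GT) : GT where
  V := Option (Σ i, (f i).V)
  fin := inferInstance
  G := JG f
  conn := JG_conn f
  acyc := JG_acyc f
  root := none

theorem join_size {ι : Type} [Fintype ι] (f : ι → GT) :
    (join f).size = 1 + ∑ i, (f i).size := by
  unfold size
  change Nat.card (Option (Σ i, (f i).V)) = _
  rw [Finite.card_option, Nat.card_sigma, add_comm]

theorem join_isLf {ι : Type} [Finite ι] (f : ι → GT) (i : ι) (u : (f i).V) :
    (join f).IsLf (some ⟨i, u⟩) ↔ (f i).IsLf u := by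
  have hinj : Function.Injective (fun v : (f i).V => (some ⟨i, v⟩ : Option (Σ i, (f i).V))) := by
    intro a b h; simpa using h
  have hcard : ¬ Nat.card (join f).V = 1 := by
    intro h
    have := (Nat.card_eq_one_iff_unique.1 h).1
    exact Option.some_ne_none _ (this.elim (some ⟨i, u⟩) none)
  have hne : (some ⟨i, u⟩ : (join f).V) ≠ (join f).root := Option.some_ne_none _
  have hdeg : (f i).root ≠ u → (JG f).neighborSet (some ⟨i, u⟩) =
      (fun v : (f i).V => (some ⟨i, v⟩ : Option (Σ i, (f i).V))) '' (f i).G.neighborSet u := by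
    intro h
    ext b
    constructor
    · intro hb
      have hb' : JAdj f _ b := hb
      cases hb' with
      | rt' => exact absurd rfl h
      | inn i u v h => exact ⟨v, h, rfl⟩
    · rintro ⟨v, hv, rfl⟩; exact .inn i u v hv
  unfold IsLf
  refine ((or_iff_right hcard).trans (and_iff_left hne)).trans ?_
  change ((JG f).neighborSet (some ⟨i, u⟩)).ncard = 1 ↔ _
  by_cases hu : u = (f i).root
  · subst hu
    simp only [ne_eq, not_true_eq_false, and_false, or_false]
    constructor
    · intro h
      by_contra hV
      have hnt : Nontrivial (f i).V := by
        have : Nonempty (f i).V := ⟨(f i).root⟩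
        rw [← Finite.one_lt_card_iff_nontrivial]
        have := Nat.card_pos (α := (f i).V)
        omega
      obtain ⟨v, hv⟩ := (f i).conn.preconnected.exists_adj_of_nontrivial (f i).root
      rw [Set.ncard_eq_one] at h
      obtain ⟨a, ha⟩ := h
      have m1 : none ∈ (JG f).neighborSet (some ⟨i, (f i).root⟩) := JAdj.rt' i
      have m2 : some ⟨i, v⟩ ∈ (JG f).neighborSet (some ⟨i, (f i).root⟩) := JAdj.inn i _ _ hv
      rw [ha] at m1 m2
      simp only [Set.mem_singleton_iff] at m1 m2
      rw [← m1] at m2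
      exact Option.some_ne_none _ m2
    · intro h
      rw [Set.ncard_eq_one]
      refine ⟨none, ?_⟩
      ext b
      simp only [Set.mem_singleton_iff]
      constructor
      · intro hb
        have hb' : JAdj f _ b := hb
        cases hb' with
        | rt' => rfl
        | inn i u v h' =>
          have := (Nat.card_eq_one_iff_unique.1 h).1
          exact absurd (this.elim _ _) h'.ne
      · rintro rfl; exact .rt' i
  · rw [hdeg (Ne.symm hu), Set.ncard_image_of_injective _ hinj]
    have : ¬ Nat.card (f i).V = 1 := by
      intro h
      have := (Nat.card_eq_one_iff_unique.1 h).1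
      exact hu (this.elim _ _)
    rw [or_iff_right this, and_iff_left hu]

open Classical in
theorem join_leaves {ι : Type} [Fintype ι] (f : ι → GT) :
    (join f).leaves = if IsEmpty ι then 1 else ∑ i, (f i).leaves := by
  split_ifs with h
  · have : Unique (join f).V := by
      change Unique (Option (Σ i, (f i).V))
      infer_instance
    have h1 : Nat.card (join f).V = 1 := Nat.card_unique
    unfold leaves
    rw [← h1]
    exact Nat.card_congr (Equiv.subtypeUnivEquiv (fun v => Or.inl h1))
  · unfold leaves
    rw [← Nat.card_sigma]
    have hroot : ¬ (join f).IsLf none := by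
      rintro (h1 | h1)
      · have := (Nat.card_eq_one_iff_unique.1 h1).1
        rw [not_isEmpty_iff] at h
        obtain ⟨i⟩ := h
        have h2 := this.elim (some ⟨i, (f i).root⟩) none
        exact Option.some_ne_none _ h2
      · exact h1.2 rfl
    symm
    refine Nat.card_congr (Equiv.ofBijective
      (fun p => ⟨some ⟨p.1, p.2.1⟩, (join_isLf f _ _).2 p.2.2⟩) ⟨?_, ?_⟩)
    · rintro ⟨i, u, hu⟩ ⟨j, v, hv⟩ h
      have h2 := Option.some.inj (congrArg Subtype.val h)
      cases h2; rfl
    · rintro ⟨(_ | ⟨i, u⟩), hu⟩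
      · exact absurd hu hroot
      · exact ⟨⟨i, u, (join_isLf f _ _).1 hu⟩, rfl⟩

end GT

open SimpleGraph

namespace GT

theorem JG_same {ι : Type} {f : ι → GT} {a b : Σ i, (f i).V} (h : (JG f).Adj (some a) (some b)) :
    a.1 = b.1 := by
  cases h; rfl

theorem join_congr {ι κ : Type} [Finite ι] [Finite κ] (f : ι → GT) (g : κ → GT) (σ : ι ≃ κ)
    (h : ∀ i, f i ≈ g (σ i)) : join f ≈ join g := by
  choose e he using h
  let E : Option (Σ i, (f i).V) ≃ Option (Σ i, (g i).V) :=
    Equiv.optionCongr (Equiv.sigmaCongr σ (fun i => (e i).toEquiv))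
  have E0 : E none = none := rfl
  have E1 : ∀ i u, E (some ⟨i, u⟩) = some ⟨σ i, e i u⟩ := fun i u => rfl
  refine ⟨⟨E, ?_⟩, rfl⟩
  intro a b
  change (JG g).Adj (E a) (E b) ↔ (JG f).Adj a b
  rcases a with _ | ⟨i, u⟩ <;> rcases b with _ | ⟨j, v⟩
  · simp [E0]
  · rw [E0, E1, JG_root, JG_root, ← he j]; exact (e j).injective.eq_iff
  · rw [E0, E1, JG_root', JG_root', ← he i]; exact (e i).injective.eq_iff
  · rw [E1, E1]
    constructor
    · intro h
      have := σ.injective (JG_same h)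
      subst this
      rw [JG_inn] at h ⊢
      exact (e i).map_adj_iff.1 h
    · intro h
      have h' := JG_same h
      simp only at h'
      subst h'
      rw [JG_inn] at h ⊢
      exact (e i).map_adj_iff.2 h

theorem piece_map {ι κ : Type} {f : ι → GT} {g : κ → GT} (e : JG f ≃g JG g)
    (he : e none = none) {i : ι} {j : κ}
    (hij : e (some ⟨i, (f i).root⟩) = some ⟨j, (g j).root⟩) (v : (f i).V) :
    ∃ v' : (g j).V, e (some ⟨i, v⟩) = some ⟨j, v'⟩ := by
  have hr := (f i).conn.preconnected (f i).root v
  rw [SimpleGraph.reachable_iff_reflTransGen] at hr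
  induction hr with
  | refl => exact ⟨_, hij⟩
  | tail _h0 hadj ih =>
    rename_i b c
    obtain ⟨b', hb'⟩ := ih
    have h1 : (JG g).Adj (e (some ⟨i, b⟩)) (e (some ⟨i, c⟩)) :=
      e.map_adj_iff.2 ((JG_inn f i b c).2 hadj)
    rw [hb'] at h1
    rcases hc : e (some ⟨i, c⟩) with _ | ⟨k, w⟩
    · rw [← he] at hc
      exact absurd (e.injective hc) (Option.some_ne_none _)
    · rw [hc] at h1
      have := JG_same h1
      simp only at this
      subst this
      exact ⟨w, rfl⟩

theorem piece_iso {ι κ : Type} {f : ι → GT} {g : κ → GT} (e : JG f ≃g JG g)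
    (he : e none = none) {i : ι} {j : κ}
    (hij : e (some ⟨i, (f i).root⟩) = some ⟨j, (g j).root⟩) : f i ≈ g j := by
  have h1 := piece_map e he hij
  have he' : e.symm none = none := by rw [e.symm_apply_eq, he]
  have hij' : e.symm (some ⟨j, (g j).root⟩) = some ⟨i, (f i).root⟩ := by
    rw [e.symm_apply_eq, hij]
  have h2 := piece_map e.symm he' hij'
  choose φ hφ using h1
  have hbij : Function.Bijective φ := by
    constructor
    · intro a b hab
      have h3 := hφ a
      rw [hab, ← hφ b] at h3
      simpa using e.injective h3
    · intro b
      obtain ⟨a, ha⟩ := h2 b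
      refine ⟨a, ?_⟩
      rw [e.symm_apply_eq, hφ a] at ha
      simpa using ha.symm
  refine ⟨⟨Equiv.ofBijective φ hbij, ?_⟩, ?_⟩
  · intro a b
    simp only [Equiv.ofBijective_apply]
    rw [← JG_inn g, ← JG_inn f, ← hφ, ← hφ, e.map_adj_iff]
  · change φ _ = _
    have h3 := hφ (f i).root
    rw [hij] at h3
    simpa using h3.symm

theorem piece_ex {ι κ : Type} {f : ι → GT} {g : κ → GT} (e : JG f ≃g JG g)
    (he : e none = none) (i : ι) : ∃ j, e (some ⟨i, (f i).root⟩) = some ⟨j, (g j).root⟩ := by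
  have h1 : (JG g).Adj (e none) (e (some ⟨i, (f i).root⟩)) := e.map_adj_iff.2 (JAdj.rt i)
  rw [he] at h1
  rcases hc : e (some ⟨i, (f i).root⟩) with _ | ⟨k, w⟩
  · rw [hc] at h1; exact absurd rfl h1.ne
  · rw [hc, JG_root] at h1
    subst h1
    exact ⟨k, rfl⟩

theorem join_inj {ι κ : Type} [Finite ι] [Finite κ] (f : ι → GT) (g : κ → GT)
    (h : join f ≈ join g) : ∃ σ : ι ≃ κ, ∀ i, f i ≈ g (σ i) := by
  obtain ⟨e, he⟩ := h
  change JG f ≃g JG g at e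
  have he : e none = none := he
  have he' : e.symm none = none := by rw [e.symm_apply_eq, he]
  choose s hs using piece_ex e he
  choose t ht using piece_ex e.symm he'
  refine ⟨⟨s, t, ?_, ?_⟩, fun i => piece_iso e he (hs i)⟩
  · intro i
    have h1 := ht (s i)
    rw [e.symm_apply_eq] at h1
    have h2 := e.injective ((hs i).trans h1)
    have h3 := congrArg Sigma.fst (Option.some.inj h2)
    exact h3.symm
  · intro j
    have h1 := hs (t j)
    rw [← ht j, e.apply_symm_apply] at h1
    have h3 := congrArg Sigma.fst (Option.some.inj h1)
    exact h3.symm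

theorem exists_join (t : GT) : ∃ (ι : Type) (_ : Finite ι) (f : ι → GT), join f ≈ t := by
  classical
  let S : Set t.V := {v | v ≠ t.root}
  let H := t.G.induce S
  have hH : H.IsAcyclic := t.acyc.induce S
  have hex : ∀ v : S, ∃ c : S, t.G.Adj t.root c ∧ H.Reachable c v := by
    have key : ∀ v, Relation.ReflTransGen t.G.Adj t.root v →
        ∀ hv : v ∈ S, ∃ c : S, t.G.Adj t.root c ∧ H.Reachable c ⟨v, hv⟩ := by
      intro v hv
      induction hv with
      | refl => intro h; exact absurd rfl h
      | tail _h0 hadj ih =>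
        rename_i b c
        intro hc
        by_cases hb : b = t.root
        · subst hb; exact ⟨⟨c, hc⟩, hadj, Reachable.refl _⟩
        · obtain ⟨d, hd, hr⟩ := ih hb
          refine ⟨d, hd, hr.trans ?_⟩
          have : H.Adj ⟨b, hb⟩ ⟨c, hc⟩ := hadj
          exact this.reachable
    intro v
    exact key v ((SimpleGraph.reachable_iff_reflTransGen _ _).1 (t.conn.preconnected _ _)) v.2
  have huniq : ∀ c c' : S, t.G.Adj t.root c → t.G.Adj t.root c' → H.Reachable c c' → c = c' := by
    intro c c' hc hc' hr
    by_contra hne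
    have hb := (isAcyclic_iff_forall_adj_isBridge.1 t.acyc) hc
    rw [isBridge_iff] at hb
    apply hb
    let φ : H →g (t.G \ fromEdgeSet {s(t.root, c.1)}) :=
      { toFun := Subtype.val
        map_rel' := by
          intro a b hab
          rw [SimpleGraph.sdiff_adj]
          refine ⟨hab, ?_⟩
          rw [fromEdgeSet_adj]
          rintro ⟨h1, _⟩
          simp only [Set.mem_singleton_iff, Sym2.eq_iff] at h1
          rcases h1 with h1 | h1
          · exact a.2 h1.1
          · exact b.2 h1.2 }
    have h1 : (t.G \ fromEdgeSet {s(t.root, c.1)}).Adj t.root c' := by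
      rw [SimpleGraph.sdiff_adj]
      refine ⟨hc', ?_⟩
      rw [fromEdgeSet_adj]
      rintro ⟨h1, _⟩
      simp only [Set.mem_singleton_iff, Sym2.eq_iff] at h1
      rcases h1 with h1 | h1
      · exact hne (Subtype.ext h1.2.symm)
      · exact c.2 h1.1.symm
    exact h1.reachable.trans (hr.symm.map φ)
  have hroot : ∀ C : H.ConnectedComponent, ∃ c : C, t.G.Adj t.root c.1.1 := by
    intro C
    obtain ⟨v, hv⟩ := C.nonempty_supp
    obtain ⟨c, hc, hr⟩ := hex v
    refine ⟨⟨c, ?_⟩, hc⟩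
    have hv' : H.connectedComponentMk v = C := hv
    change H.connectedComponentMk c = C
    rw [← hv', ConnectedComponent.eq]
    exact hr
  choose rt hrt using hroot
  let f : H.ConnectedComponent → GT := fun C =>
    { V := C
      fin := Subtype.finite
      G := C.toSimpleGraph
      conn := C.connected_toSimpleGraph
      acyc := (hH.isTree_connectedComponent C).isAcyclic
      root := rt C }
  have hfin : Finite H.ConnectedComponent := inferInstance
  refine ⟨H.ConnectedComponent, hfin, f, ?_⟩
  let φ : Option (Σ C, (f C).V) → t.V := fun a => match a with
    | none => t.root
    | some ⟨C, v⟩ => (v : C).1.1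
  have φ0 : φ none = t.root := rfl
  have φ1 : ∀ (C : H.ConnectedComponent) (v : C), φ (some ⟨C, v⟩) = v.1.1 := fun C v => rfl
  have hbij : Function.Bijective φ := by
    constructor
    · rintro (_ | ⟨C, v⟩) (_ | ⟨C', v'⟩) h
      · rfl
      · exact absurd h.symm (v' : C').1.2
      · exact absurd h (v : C).1.2
      · change C at v; change C' at v'
        obtain ⟨v, hv⟩ := v
        obtain ⟨v', hv'⟩ := v'
        have h1 : v = v' := Subtype.ext h
        subst h1
        have hv : H.connectedComponentMk v = C := hv
        have hv' : H.connectedComponentMk v = C' := hv'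
        subst hv; subst hv'; rfl
    · intro v
      by_cases hv : v = t.root
      · exact ⟨none, hv.symm⟩
      · exact ⟨some ⟨H.connectedComponentMk ⟨v, hv⟩, (⟨⟨v, hv⟩, rfl⟩ :
          (H.connectedComponentMk ⟨v, hv⟩ : H.ConnectedComponent))⟩, rfl⟩
  have hradj : ∀ (C : H.ConnectedComponent) (v : C), t.G.Adj t.root v.1.1 ↔ v = rt C := by
    intro C v
    constructor
    · intro h
      apply Subtype.ext
      apply huniq _ _ h (hrt C)
      exact C.reachable_of_mem_supp v.2 (rt C).2
    · rintro rfl; exact hrt C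
  refine ⟨⟨Equiv.ofBijective φ hbij, ?_⟩, rfl⟩
  intro a b
  change t.G.Adj (φ a) (φ b) ↔ (JG f).Adj a b
  rcases a with _ | ⟨C, v⟩ <;> rcases b with _ | ⟨C', v'⟩
  · simp
  · rw [JG_root]; exact hradj C' v'
  · rw [JG_root', SimpleGraph.adj_comm]; exact hradj C v
  · change C at v; change C' at v'
    constructor
    · intro h
      have h' : H.Adj v.1 v'.1 := h
      have e1 : H.connectedComponentMk v.1 = C := v.2
      have e2 : H.connectedComponentMk v'.1 = C' := v'.2
      have e3 : C = C' := by
        rw [← e1, ← e2, ConnectedComponent.eq]; exact h'.reachable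
      subst e3
      rw [JG_inn]
      exact h'
    · intro h
      have e3 := JG_same h
      simp only at e3
      subst e3
      rw [JG_inn] at h
      exact h

open Classical in
theorem map_eq_of_equiv {ι κ : Type} [Fintype ι] [Fintype κ] {α : Type*} (f : ι → α) (g : κ → α) :
    (Finset.univ.val.map f = Finset.univ.val.map g) ↔ ∃ σ : ι ≃ κ, ∀ i, f i = g (σ i) := by
  constructor
  · intro h
    have hc : ∀ a, Nonempty ({i // f i = a} ≃ {j // g j = a}) := by
      intro a
      have h1 := congrArg (Multiset.count a) h
      rw [Multiset.count_map, Multiset.count_map] at h1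
      rw [← Fintype.card_eq, Fintype.card_subtype, Fintype.card_subtype]
      simpa [eq_comm, Finset.card, Finset.filter] using h1
    let σ := Equiv.ofFiberEquiv (fun a => (hc a).some)
    exact ⟨σ, fun i => (Equiv.ofFiberEquiv_map (fun a => (hc a).some) i).symm⟩
  · rintro ⟨σ, h⟩
    have : f = g ∘ σ := funext h
    rw [this, ← Multiset.map_map, Multiset.map_univ_val_equiv]

abbrev Q := Quotient gtSetoid

noncomputable def F (s : Multiset Q) : Q :=
  ⟦join (fun i : Fin s.toList.length => (s.toList.get i).out)⟧

theorem F_aux (s : Multiset Q) :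
    Finset.univ.val.map (fun i : Fin s.toList.length => (⟦(s.toList.get i).out⟧ : Q)) = s := by
  simp only [Quotient.out_eq]
  rw [Fin.univ_val_map, List.ofFn_get, Multiset.coe_toList]

theorem F_join {ι : Type} [Fintype ι] (f : ι → GT) :
    F (Finset.univ.val.map (fun i => (⟦f i⟧ : Q))) = ⟦join f⟧ := by
  set s := Finset.univ.val.map (fun i => (⟦f i⟧ : Q)) with hs
  have h := F_aux s
  rw [hs, map_eq_of_equiv] at h
  obtain ⟨σ, h⟩ := h
  exact Quotient.sound (join_congr _ _ σ (fun i => Quotient.exact (h i)))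

theorem F_bij : Function.Bijective F := by
  constructor
  · intro s s' h
    obtain ⟨σ, h⟩ := join_inj _ _ (Quotient.exact h)
    rw [← F_aux s, ← F_aux s', map_eq_of_equiv]
    exact ⟨σ, fun i => Quotient.sound (h i)⟩
  · intro q
    induction q using Quotient.inductionOn with
    | _ t =>
    obtain ⟨ι, hι, f, hf⟩ := exists_join t
    have := Fintype.ofFinite ι
    refine ⟨_, (F_join f).trans (Quotient.sound hf)⟩

noncomputable def qsize : Q → ℕ := Quotient.lift size (fun _ _ h => size_congr h)
noncomputable def qleaves : Q → ℕ := Quotient.lift leaves (fun _ _ h => leaves_congr h)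

theorem qsize_pos (q : Q) : 0 < qsize q := by
  induction q using Quotient.inductionOn with
  | _ t => exact size_pos t

theorem qleaves_le (q : Q) : qleaves q ≤ qsize q := by
  induction q using Quotient.inductionOn with
  | _ t => exact leaves_le t

theorem qsize_F (s : Multiset Q) : qsize (F s) = 1 + (s.map qsize).sum := by
  conv_rhs => rw [← F_aux s]
  rw [Multiset.map_map]
  exact join_size _

theorem qleaves_F (s : Multiset Q) (hs : s ≠ 0) : qleaves (F s) = (s.map qleaves).sum := by
  classical
  conv_rhs => rw [← F_aux s]
  rw [Multiset.map_map]
  refine (join_leaves _).trans ?_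
  rw [if_neg]
  · rfl
  · intro h
    apply hs
    rw [← F_aux s]
    simp

theorem qleaves_F_zero : qleaves (F 0) = 1 := by
  classical
  refine (join_leaves _).trans ?_
  rw [if_pos]
  simp only [Multiset.toList_zero, List.length_nil]
  infer_instance

end GT

open SimpleGraph

namespace GT

def ofR {n : ℕ} (t : RTree n) : GT := ⟨Fin n, inferInstance, t.adj, t.connected, t.acyclic, t.root⟩

theorem ofR_size {n : ℕ} (t : RTree n) : (ofR t).size = n := by
  change Nat.card (Fin n) = n
  simp

theorem ofR_leaves {n : ℕ} (t : RTree n) : (ofR t).leaves = numLeaves t := by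
  unfold leaves numLeaves
  apply Nat.card_congr
  refine (Equiv.refl (Fin n)).subtypeEquiv ?_
  intro v
  unfold IsLf IsLeafV
  have : Nat.card (ofR t).V = n := ofR_size t
  rw [this]
  rfl

theorem exists_ofR (t : GT) (n : ℕ) (h : t.size = n) : ∃ r : RTree n, ofR r ≈ t := by
  subst h
  let e : t.V ≃ Fin t.size := Finite.equivFin t.V
  let i : t.G ≃g t.G.map e.toEmbedding := Iso.map e t.G
  refine ⟨⟨t.G.map e.toEmbedding, i.connected_iff.1 t.conn, i.isAcyclic_iff.1 t.acyc, e t.root⟩, ?_⟩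
  refine Setoid.symm ?_
  exact ⟨i, rfl⟩

noncomputable def qpt (q : Q) : ℕ × ℕ := (qsize q, qleaves q)

instance finR (n : ℕ) : Finite (RTree n) := by
  apply Finite.of_injective (fun t : RTree n => (t.adj, t.root))
  rintro ⟨a, _, _, r⟩ ⟨a', _, _, r'⟩ h
  simp only [Prod.mk.injEq] at h
  obtain ⟨rfl, rfl⟩ := h
  rfl

theorem fib_equiv (n k : ℕ) : Nonempty ((Quotient (Setoid.comap
    (Subtype.val : {t : RTree n // numLeaves t = k} → RTree n)
    (treeSetoid n))) ≃ {q : Q // qpt q = (n, k)}) := by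
  let φ : (Quotient (Setoid.comap
    (Subtype.val : {t : RTree n // numLeaves t = k} → RTree n)
    (treeSetoid n))) → {q : Q // qpt q = (n, k)} := Quotient.lift
      (fun t => ⟨⟦ofR t.1⟧, by
        change (size (ofR t.1), leaves (ofR t.1)) = (n, k)
        rw [ofR_size, ofR_leaves, t.2]⟩)
      (by
        intro a b h
        apply Subtype.ext
        exact Quotient.sound h)
  refine ⟨Equiv.ofBijective φ ⟨?_, ?_⟩⟩
  · intro a b h
    induction a using Quotient.inductionOn with
    | _ a =>
    induction b using Quotient.inductionOn with
    | _ b =>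
    have h1 : (⟦ofR a.1⟧ : Q) = ⟦ofR b.1⟧ := congrArg Subtype.val h
    have h2 : ofR a.1 ≈ ofR b.1 := Quotient.exact h1
    apply Quotient.sound
    exact h2
  · rintro ⟨q, hq⟩
    induction q using Quotient.inductionOn with
    | _ t =>
    have h0 : (size t, leaves t) = (n, k) := hq
    simp only [Prod.mk.injEq] at h0
    obtain ⟨r, hr⟩ := exists_ofR t n h0.1
    refine ⟨⟦⟨r, ?_⟩⟧, ?_⟩
    · rw [← ofR_leaves, leaves_congr hr, h0.2]
    · apply Subtype.ext
      exact Quotient.sound hr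

instance fib_fin (p : ℕ × ℕ) : Finite {q : Q // qpt q = p} := by
  obtain ⟨e⟩ := fib_equiv p.1 p.2
  exact Finite.of_equiv _ e

theorem aCount_eq (p : ℕ × ℕ) : aCount p.1 p.2 = Nat.card {q : Q // qpt q = p} := by
  obtain ⟨e⟩ := fib_equiv p.1 p.2
  exact Nat.card_congr e

noncomputable def w (x z : ℝ) (q : Q) : ℝ := x ^ qsize q * z ^ qleaves q

theorem w_nonneg {x z : ℝ} (hx : 0 ≤ x) (hz : 0 ≤ z) (q : Q) : 0 ≤ w x z q := by
  unfold w; positivity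

theorem fib_sum (x z : ℝ) (p : ℕ × ℕ) :
    ∑' q : {q : Q // qpt q = p}, w x z q.1 = (aCount p.1 p.2 : ℝ) * x ^ p.1 * z ^ p.2 := by
  have h : ∀ q : {q : Q // qpt q = p}, w x z q.1 = x ^ p.1 * z ^ p.2 := by
    rintro ⟨q, rfl⟩; rfl
  rw [tsum_congr h, tsum_const, aCount_eq, nsmul_eq_mul, mul_assoc]

theorem summable_iff {x z : ℝ} (hx : 0 ≤ x) (hz : 0 ≤ z) :
    Summable (fun p : ℕ × ℕ => (aCount p.1 p.2 : ℝ) * x ^ p.1 * z ^ p.2) ↔ Summable (w x z) := by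
  rw [← (Equiv.sigmaFiberEquiv qpt).summable_iff, summable_sigma_of_nonneg]
  · constructor
    · intro h
      refine ⟨fun p => Summable.of_finite, ?_⟩
      convert h using 2 with p
      exact fib_sum x z p
    · intro h
      convert h.2 using 2 with p
      exact (fib_sum x z p).symm
  · intro q; exact w_nonneg hx hz _

theorem Treal_eq {x z : ℝ} (hx : 0 ≤ x) (hz : 0 ≤ z) : Treal x z = ∑' q, w x z q := by
  unfold Treal
  by_cases h : Summable (w x z)
  · rw [← (Equiv.sigmaFiberEquiv qpt).tsum_eq (w x z),
      Summable.tsum_sigma (f := fun c => w x z (Equiv.sigmaFiberEquiv qpt c)) ((Equiv.sigmaFiberEquiv qpt).summable_iff.2 h)]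
    exact tsum_congr (fun p => (fib_sum x z p).symm)
  · rw [tsum_eq_zero_of_not_summable h,
      tsum_eq_zero_of_not_summable (by rwa [summable_iff hx hz])]

end GT

open scoped ENNReal

namespace GT

theorem tsum_ms {α : Type*} [DecidableEq α] (W : α → ℝ≥0∞) (S : Finset α) :
    ∑' s : {s : Multiset α // ∀ a ∈ s, a ∈ S}, (s.1.map W).prod = ∏ a ∈ S, (1 - W a)⁻¹ := by
  induction S using Finset.induction_on with
  | empty =>
    have hu : ∀ s : {s : Multiset α // ∀ a ∈ s, a ∈ (∅ : Finset α)}, s = ⟨0, by simp⟩ := by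
      rintro ⟨s, hs⟩
      apply Subtype.ext
      exact Multiset.eq_zero_of_forall_notMem (fun a ha => by simpa using hs a ha)
    rw [tsum_eq_single ⟨0, by simp⟩ (fun s hs => absurd (hu s) hs)]
    simp
  | insert a S ha ih =>
    rw [Finset.prod_insert ha, ← ih, ← ENNReal.tsum_geometric, ← ENNReal.tsum_mul_right]
    simp_rw [← ENNReal.tsum_mul_left]
    rw [← ENNReal.tsum_prod]
    let φ : ℕ × {s : Multiset α // ∀ a ∈ s, a ∈ S} →
        {s : Multiset α // ∀ b ∈ s, b ∈ insert a S} := fun p =>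
      ⟨Multiset.replicate p.1 a + p.2.1, by
        intro b hb
        rw [Multiset.mem_add] at hb
        rcases hb with hb | hb
        · rw [Multiset.eq_of_mem_replicate hb]; exact Finset.mem_insert_self _ _
        · exact Finset.mem_insert_of_mem (p.2.2 b hb)⟩
    have hφ : Function.Bijective φ := by
      constructor
      · rintro ⟨n, s, hs⟩ ⟨m, t, ht⟩ h
        have h1 : Multiset.replicate n a + s = Multiset.replicate m a + t := congrArg Subtype.val h
        have hs0 : Multiset.count a s = 0 := Multiset.count_eq_zero.2 (fun h => ha (hs a h))
        have ht0 : Multiset.count a t = 0 := Multiset.count_eq_zero.2 (fun h => ha (ht a h))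
        have h2 := congrArg (Multiset.count a) h1
        simp only [Multiset.count_add, Multiset.count_replicate_self, hs0, ht0, add_zero] at h2
        subst h2
        have h3 := add_left_cancel h1
        subst h3
        rfl
      · rintro ⟨s, hs⟩
        refine ⟨⟨Multiset.count a s, s.filter (fun b => ¬ b = a), ?_⟩, ?_⟩
        · intro b hb
          rw [Multiset.mem_filter] at hb
          exact (Finset.mem_insert.1 (hs b hb.1)).resolve_left hb.2
        · apply Subtype.ext
          change Multiset.replicate (Multiset.count a s) a + s.filter (fun b => ¬ b = a) = s
          rw [← Multiset.filter_eq', Multiset.filter_add_not]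
    rw [← (Equiv.ofBijective φ hφ).tsum_eq]
    apply tsum_congr
    rintro ⟨n, s⟩
    simp [φ]

theorem prod_le_tsum_ms {α : Type*} (W : α → ℝ≥0∞) (S : Finset α) :
    ∏ a ∈ S, (1 - W a)⁻¹ ≤ ∑' s : Multiset α, (s.map W).prod := by
  classical
  rw [← tsum_ms]
  exact ENNReal.tsum_comp_le_tsum_of_injective Subtype.val_injective
    (fun s : Multiset α => (s.map W).prod)

theorem tsum_ms_le {α : Type*} (W : α → ℝ≥0∞) (C : ℝ≥0∞)
    (h : ∀ S : Finset α, ∏ a ∈ S, (1 - W a)⁻¹ ≤ C) :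
    ∑' s : Multiset α, (s.map W).prod ≤ C := by
  classical
  rw [ENNReal.tsum_eq_iSup_sum]
  refine iSup_le (fun A => ?_)
  let S : Finset α := A.biUnion (fun s => s.toFinset)
  refine le_trans ?_ (h S)
  rw [← tsum_ms]
  have hA : ∀ s ∈ A, ∀ a ∈ s, a ∈ S := by
    intro s hs a ha
    exact Finset.mem_biUnion.2 ⟨s, hs, Multiset.mem_toFinset.2 ha⟩
  rw [← Finset.sum_attach]
  let j : {s // s ∈ A} → {s : Multiset α // ∀ a ∈ s, a ∈ S} := fun s => ⟨s.1, hA s.1 s.2⟩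
  have hj : Function.Injective j := by
    intro a b h
    have h1 : (j a).1 = (j b).1 := by rw [h]
    exact Subtype.ext h1
  calc ∑ s ∈ A.attach, (s.1.map W).prod = ∑ s ∈ A.attach.map ⟨j, hj⟩, (s.1.map W).prod := by
        rw [Finset.sum_map]; rfl
    _ ≤ _ := ENNReal.sum_le_tsum _

noncomputable def We (x z : ℝ≥0∞) (q : Q) : ℝ≥0∞ := x ^ qsize q * z ^ qleaves q

theorem We_F (x z : ℝ≥0∞) (s : Multiset Q) (hs : s ≠ 0) :
    We x z (F s) = x * (s.map (We x z)).prod := by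
  unfold We
  rw [qsize_F, qleaves_F s hs, Multiset.prod_map_mul, pow_add, pow_one]
  have h : ∀ (y : ℝ≥0∞) (g : Q → ℕ) (s : Multiset Q),
      y ^ (s.map g).sum = (s.map (fun q => y ^ g q)).prod := by
    intro y g s
    induction s using Multiset.induction_on with
    | empty => simp
    | cons a s ih => simp [pow_add, ih]
  rw [h, h, mul_assoc]

theorem We_F_zero (x z : ℝ≥0∞) : We x z (F 0) = x * z := by
  unfold We
  rw [qsize_F, qleaves_F_zero]; simp

theorem fun_eq (x z : ℝ≥0∞) :
    ∑' q, We x z q + x = x * z + x * ∑' s : Multiset Q, (s.map (We x z)).prod := by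
  classical
  rw [← (Equiv.ofBijective F F_bij).tsum_eq]
  simp only [Equiv.ofBijective_apply]
  rw [ENNReal.tsum_eq_add_tsum_ite (0 : Multiset Q),
    ENNReal.tsum_eq_add_tsum_ite (f := fun s : Multiset Q => (s.map (We x z)).prod) (0 : Multiset Q)]
  rw [We_F_zero, mul_add, Multiset.map_zero, Multiset.prod_zero, mul_one, ← ENNReal.tsum_mul_left,
    add_assoc, add_comm _ x]
  congr 3
  funext s
  split_ifs with h
  · simp
  · exact We_F x z s h

open Classical in
noncomputable def WN (x z : ℝ≥0∞) (N : ℕ) (q : Q) : ℝ≥0∞ := if qsize q ≤ N then We x z q else 0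

theorem fun_le (x z : ℝ≥0∞) (N : ℕ) :
    ∑' q, WN x z (N + 1) q + x ≤ x * z + x * ∑' s : Multiset Q, (s.map (WN x z N)).prod := by
  classical
  rw [← (Equiv.ofBijective F F_bij).tsum_eq]
  simp only [Equiv.ofBijective_apply]
  rw [ENNReal.tsum_eq_add_tsum_ite (0 : Multiset Q),
    ENNReal.tsum_eq_add_tsum_ite (f := fun s : Multiset Q => (s.map (WN x z N)).prod)
      (0 : Multiset Q)]
  have h0 : WN x z (N + 1) (F 0) ≤ x * z := by
    rw [← We_F_zero]; unfold WN; split_ifs <;> simp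
  rw [mul_add, Multiset.map_zero, Multiset.prod_zero, mul_one, ← ENNReal.tsum_mul_left,
    add_assoc, add_comm _ x]
  gcongr with s
  split_ifs with h
  · simp
  · by_cases hs : qsize (F s) ≤ N + 1
    · have h1 : WN x z (N + 1) (F s) = We x z (F s) := if_pos hs
      rw [h1, We_F x z s h]
      apply le_of_eq
      congr 2
      apply Multiset.map_congr rfl
      intro q hq
      have : qsize q ≤ N := by
        rw [qsize_F] at hs
        have := Multiset.single_le_sum (s := s.map qsize) (by simp) (qsize q)
          (Multiset.mem_map_of_mem _ hq)
        omega
      exact (if_pos this).symm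
    · have h1 : WN x z (N + 1) (F s) = 0 := if_neg hs
      rw [h1]; exact zero_le

end GT

open scoped ENNReal
open Filter Topology

namespace GT

theorem We_ofReal {x z : ℝ} (hx : 0 ≤ x) (hz : 0 ≤ z) (q : Q) :
    We (ENNReal.ofReal x) (ENNReal.ofReal z) q = ENNReal.ofReal (w x z q) := by
  unfold We w
  rw [ENNReal.ofReal_mul (by positivity), ENNReal.ofReal_pow hx, ENNReal.ofReal_pow hz]

theorem prod_ofReal {α : Type*} (v : α → ℝ) (S : Finset α) (h0 : ∀ q, 0 ≤ v q)
    (h : ∀ q ∈ S, v q < 1) :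
    ∏ q ∈ S, (1 - ENNReal.ofReal (v q))⁻¹ = ENNReal.ofReal (∏ q ∈ S, (1 - v q)⁻¹) := by
  rw [ENNReal.ofReal_prod_of_nonneg]
  · apply Finset.prod_congr rfl
    intro q hq
    have := h q hq
    rw [ENNReal.ofReal_inv_of_pos (by linarith), ENNReal.ofReal_sub _ (h0 q), ENNReal.ofReal_one]
  · intro q hq
    have := h q hq
    exact inv_nonneg.2 (by linarith)

/-- the super-solution lemma -/
theorem super {x z y B : ℝ} (hx : 0 < x) (hz : 0 < z) (hy : 0 ≤ y) (hB0 : 0 ≤ B)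
    (hB : x * z + x * B ≤ y + x)
    (hS : ∀ v : Q → ℝ, (∀ q, 0 ≤ v q) → (∀ q, v q ≤ w x z q) →
      (∀ S : Finset Q, ∑ q ∈ S, v q ≤ y) →
      ∀ S : Finset Q, (∀ q ∈ S, v q < 1) ∧ ∏ q ∈ S, (1 - v q)⁻¹ ≤ B) :
    Summable (w x z) ∧ ∑' q, w x z q ≤ y := by
  classical
  set X := ENNReal.ofReal x
  set Z := ENNReal.ofReal z
  have hw0 := w_nonneg hx.le hz.le
  have key : ∀ N, ∑' q, WN X Z N q ≤ ENNReal.ofReal y := by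
    intro N
    induction N with
    | zero =>
      have : ∀ q, WN X Z 0 q = 0 := by
        intro q
        have := qsize_pos q
        exact if_neg (by omega)
      simp [this]
    | succ N ih =>
      let v : Q → ℝ := fun q => if qsize q ≤ N then w x z q else 0
      have hv : ∀ q, WN X Z N q = ENNReal.ofReal (v q) := by
        intro q
        unfold WN
        simp only [v]
        split_ifs
        · exact We_ofReal hx.le hz.le q
        · simp
      have hv0 : ∀ q, 0 ≤ v q := by
        intro q; simp only [v]; split_ifs
        · exact hw0 q
        · exact le_rfl
      have hvw : ∀ q, v q ≤ w x z q := by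
        intro q; simp only [v]; split_ifs
        · exact le_rfl
        · exact hw0 q
      have hvs : ∀ S : Finset Q, ∑ q ∈ S, v q ≤ y := by
        intro S
        rw [← ENNReal.ofReal_le_ofReal_iff hy, ENNReal.ofReal_sum_of_nonneg (fun q _ => hv0 q)]
        simp_rw [← hv]
        exact (ENNReal.sum_le_tsum S).trans ih
      have hM : ∑' s : Multiset Q, (s.map (WN X Z N)).prod ≤ ENNReal.ofReal B := by
        apply tsum_ms_le
        intro S
        obtain ⟨h1, h2⟩ := hS v hv0 hvw hvs S
        simp_rw [hv]
        rw [prod_ofReal v S hv0 h1]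
        exact ENNReal.ofReal_le_ofReal h2
      have h3 := (fun_le X Z N).trans (add_le_add_right (mul_le_mul_right hM X) (X * Z))
      rw [← ENNReal.ofReal_mul hx.le, ← ENNReal.ofReal_mul hx.le,
        ← ENNReal.ofReal_add (by positivity) (by positivity)] at h3
      have h4 := h3.trans (ENNReal.ofReal_le_ofReal hB)
      rw [ENNReal.ofReal_add hy hx.le] at h4
      exact (ENNReal.add_le_add_iff_right ENNReal.ofReal_ne_top).1 h4
  have hfin : ∀ S : Finset Q, ∑ q ∈ S, w x z q ≤ y := by
    intro S
    rw [← ENNReal.ofReal_le_ofReal_iff hy, ENNReal.ofReal_sum_of_nonneg (fun q _ => hw0 q)]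
    refine le_trans ?_ (key (S.sup qsize))
    refine le_trans (le_of_eq ?_) (ENNReal.sum_le_tsum S)
    apply Finset.sum_congr rfl
    intro q hq
    rw [← We_ofReal hx.le hz.le]
    exact (if_pos (Finset.le_sup hq)).symm
  exact ⟨summable_of_sum_le hw0 hfin, (summable_of_sum_le hw0 hfin).tsum_le_of_sum_le hfin⟩

noncomputable def L1 (u : ℝ) : ℝ := -Real.log (1 - u)
noncomputable def L2 (u : ℝ) : ℝ := -Real.log (1 - u) - u

theorem L2_nonneg {u : ℝ} (h : u < 1) : 0 ≤ L2 u := by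
  unfold L2
  have := Real.log_le_sub_one_of_pos (show 0 < 1 - u by linarith)
  linarith

theorem exp_L1 {α : Type*} (v : α → ℝ) (S : Finset α) (h : ∀ q ∈ S, v q < 1) :
    ∏ q ∈ S, (1 - v q)⁻¹ = Real.exp (∑ q ∈ S, L1 (v q)) := by
  rw [Real.exp_sum]
  apply Finset.prod_congr rfl
  intro q hq
  unfold L1
  rw [Real.exp_neg, Real.exp_log (by linarith [h q hq])]

theorem real_fun_eq {x z : ℝ} (hx : 0 < x) (hz : 0 < z) (hs : Summable (w x z)) :
    (∀ q, w x z q < 1) ∧ Summable (fun q => L1 (w x z q)) ∧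
      ∑' q, w x z q + x = x * z + x * Real.exp (∑' q, L1 (w x z q)) := by
  classical
  have hw0 := w_nonneg hx.le hz.le
  have hE := fun_eq (ENNReal.ofReal x) (ENNReal.ofReal z)
  set M := ∑' s : Multiset Q, (s.map (We (ENNReal.ofReal x) (ENNReal.ofReal z))).prod with hMdef
  have hW : We (ENNReal.ofReal x) (ENNReal.ofReal z) = fun q => ENNReal.ofReal (w x z q) :=
    funext (We_ofReal hx.le hz.le)
  have hT : ∑' q, We (ENNReal.ofReal x) (ENNReal.ofReal z) q = ENNReal.ofReal (∑' q, w x z q) := by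
    rw [hW, ENNReal.ofReal_tsum_of_nonneg hw0 hs]
  rw [hT] at hE
  have hx0 : ENNReal.ofReal x ≠ 0 := by simpa using hx
  have hM : M ≠ ⊤ := by
    intro h
    rw [h, ENNReal.mul_top hx0] at hE
    simp at hE
  have hle : ∀ S : Finset Q, ∏ q ∈ S, (1 - ENNReal.ofReal (w x z q))⁻¹ ≤ M := by
    intro S
    rw [hMdef, hW]
    exact prod_le_tsum_ms _ S
  have h1 : ∀ q, w x z q < 1 := by
    intro q
    by_contra h
    have h2 := hle {q}
    have h3 : 1 - ENNReal.ofReal (w x z q) = 0 := by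
      rw [tsub_eq_zero_iff_le]
      simpa using h
    rw [Finset.prod_singleton, h3, ENNReal.inv_zero] at h2
    exact hM (top_le_iff.1 h2)
  have hle2 : ∀ S : Finset Q, Real.exp (∑ q ∈ S, L1 (w x z q)) ≤ M.toReal := by
    intro S
    have h2 := hle S
    rw [prod_ofReal _ S hw0 (fun q _ => h1 q), exp_L1 _ _ (fun q _ => h1 q)] at h2
    exact (ENNReal.ofReal_le_iff_le_toReal hM).1 h2
  have hL0 : ∀ q, 0 ≤ L1 (w x z q) := by
    intro q
    have := L2_nonneg (h1 q)
    have := hw0 q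
    unfold L2 at *; unfold L1; linarith
  have hMpos : 0 < M.toReal := lt_of_lt_of_le (Real.exp_pos _) (hle2 ∅)
  have hLs : Summable (fun q => L1 (w x z q)) := by
    apply summable_of_sum_le (c := Real.log M.toReal) hL0
    intro S
    rw [Real.le_log_iff_exp_le hMpos]
    exact hle2 S
  refine ⟨h1, hLs, ?_⟩
  have hMeq : M.toReal = Real.exp (∑' q, L1 (w x z q)) := by
    apply le_antisymm
    · apply ENNReal.toReal_le_of_le_ofReal (Real.exp_pos _).le
      apply tsum_ms_le
      intro S
      rw [hW, prod_ofReal _ S hw0 (fun q _ => h1 q), exp_L1 _ _ (fun q _ => h1 q)]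
      apply ENNReal.ofReal_le_ofReal
      apply Real.exp_le_exp.2
      exact hLs.sum_le_tsum S (fun q _ => hL0 q)
    · have ht : Tendsto (fun S : Finset Q => Real.exp (∑ q ∈ S, L1 (w x z q))) atTop
          (𝓝 (Real.exp (∑' q, L1 (w x z q)))) :=
        (Real.continuous_exp.tendsto _).comp hLs.hasSum
      exact le_of_tendsto' ht hle2
  have h5 := congrArg ENNReal.toReal hE
  have hT0 : 0 ≤ ∑' q, w x z q := tsum_nonneg hw0
  rw [ENNReal.toReal_add ENNReal.ofReal_ne_top ENNReal.ofReal_ne_top,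
    ENNReal.toReal_add (ENNReal.mul_ne_top ENNReal.ofReal_ne_top ENNReal.ofReal_ne_top)
      (ENNReal.mul_ne_top ENNReal.ofReal_ne_top hM), ENNReal.toReal_mul, ENNReal.toReal_mul,
    ENNReal.toReal_ofReal hT0, ENNReal.toReal_ofReal hx.le, ENNReal.toReal_ofReal hz.le, hMeq] at h5
  exact h5

end GT

open Filter Topology

namespace GT

theorem w_mono {x x' z z' : ℝ} (hx : 0 ≤ x) (hz : 0 ≤ z) (hxx : x ≤ x') (hzz : z ≤ z') (q : Q) :
    w x z q ≤ w x' z' q := by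
  unfold w
  have : 0 ≤ x' := hx.trans hxx
  gcongr

theorem D_mono {x x' z z' : ℝ} (hx : 0 ≤ x) (hz : 0 ≤ z) (hxx : x ≤ x') (hzz : z ≤ z')
    (h : Summable (w x' z')) : Summable (w x z) :=
  Summable.of_nonneg_of_le (w_nonneg hx hz) (w_mono hx hz hxx hzz) h

theorem L2_mono {v u : ℝ} (hv : 0 ≤ v) (hvu : v ≤ u) (hu : u < 1) : L2 v ≤ L2 u := by
  unfold L2
  have h1 : 0 < 1 - u := by linarith
  have h2 : 0 < 1 - v := by linarith
  have h3 := Real.one_sub_inv_le_log_of_pos (show 0 < (1 - v) / (1 - u) by positivity)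
  rw [Real.log_div h2.ne' h1.ne', inv_div] at h3
  have h4 : u - v ≤ 1 - (1 - u) / (1 - v) := by
    rw [le_sub_iff_add_le, ← le_sub_iff_add_le', div_le_iff₀ h2]
    nlinarith
  linarith

theorem weier (v : Q → ℝ) (S : Finset Q) (h0 : ∀ q, 0 ≤ v q) (h1 : ∀ q, v q ≤ 1) :
    1 - ∑ q ∈ S, v q ≤ ∏ q ∈ S, (1 - v q) := by
  classical
  have : 1 - ∑ q ∈ S, v q ≤ ∏ q ∈ S, (1 - v q) ∧ ∏ q ∈ S, (1 - v q) ≤ 1 ∧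
      0 ≤ ∏ q ∈ S, (1 - v q) := by
    induction S using Finset.induction_on with
    | empty => simp
    | insert a S ha ih =>
      rw [Finset.sum_insert ha, Finset.prod_insert ha]
      obtain ⟨i1, i2, i3⟩ := ih
      have := h0 a
      have := h1 a
      refine ⟨?_, ?_, ?_⟩
      · nlinarith
      · nlinarith
      · exact mul_nonneg (by linarith) i3
  exact this.1

theorem crude {z : ℝ} (hz : 0 < z) : Summable (w (1 / (2 * (z + 1))) z) := by
  have hx : 0 < 1 / (2 * (z + 1)) := by positivity
  refine (super (y := 1 / 2) (B := 2) hx hz (by norm_num) (by norm_num) ?_ ?_).1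
  · have : 1 / (2 * (z + 1)) * (z + 1) = 1 / 2 := by field_simp
    linarith
  · intro v hv0 _ hvs S
    have h1 : ∀ q, v q ≤ 1 / 2 := fun q => by simpa using hvs {q}
    refine ⟨fun q _ => by linarith [h1 q], ?_⟩
    rw [Finset.prod_inv_distrib]
    have h2 := weier v S hv0 (fun q => by linarith [h1 q])
    have h3 := hvs S
    rw [show (2 : ℝ) = (1 / 2)⁻¹ by norm_num]
    apply inv_anti₀ (by norm_num)
    linarith

noncomputable def hQ (x z : ℝ) : ℝ := ∑' q, L2 (w x z q)
noncomputable def TQ (x z : ℝ) : ℝ := ∑' q, w x z q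

theorem super_exp {x z y : ℝ} (hx : 0 < x) (hz : 0 < z) (hy : 0 ≤ y)
    (h1 : ∀ q, w x z q < 1) (h2 : Summable (fun q => L2 (w x z q)))
    (hle : x * z + x * Real.exp (y + hQ x z) ≤ y + x) :
    Summable (w x z) ∧ TQ x z ≤ y := by
  refine super hx hz hy (Real.exp_pos _).le hle ?_
  intro v hv0 hvw hvs S
  have hv1 : ∀ q ∈ S, v q < 1 := fun q _ => (hvw q).trans_lt (h1 q)
  refine ⟨hv1, ?_⟩
  rw [exp_L1 v S hv1]
  apply Real.exp_le_exp.2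
  calc ∑ q ∈ S, L1 (v q) = ∑ q ∈ S, v q + ∑ q ∈ S, L2 (v q) := by
        rw [← Finset.sum_add_distrib]
        apply Finset.sum_congr rfl
        intro q _
        unfold L1 L2; ring
    _ ≤ y + ∑ q ∈ S, L2 (w x z q) := by
        apply add_le_add (hvs S)
        exact Finset.sum_le_sum (fun q _ => L2_mono (hv0 q) (hvw q) (h1 q))
    _ ≤ y + hQ x z := by
        have := h2.sum_le_tsum S (fun q _ => L2_nonneg (h1 q))
        unfold hQ; linarith

theorem D_facts {x z : ℝ} (hx : 0 < x) (hz : 0 < z) (hs : Summable (w x z)) :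
    (∀ q, w x z q < 1) ∧ Summable (fun q => L2 (w x z q)) ∧
      TQ x z + x = x * z + x * Real.exp (TQ x z + hQ x z) := by
  obtain ⟨h1, h2, h3⟩ := real_fun_eq hx hz hs
  have h4 : (fun q => L2 (w x z q)) = fun q => L1 (w x z q) - w x z q := by
    funext q; unfold L1 L2; ring
  refine ⟨h1, ?_, ?_⟩
  · rw [h4]; exact h2.sub hs
  · have h5 : hQ x z = ∑' q, L1 (w x z q) - TQ x z := by
      unfold hQ TQ
      rw [h4, h2.tsum_sub hs]
    rw [h5, add_sub_cancel]
    exact h3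

theorem D_bounds {x z : ℝ} (hx : 0 < x) (hz : 0 < z) (hs : Summable (w x z)) :
    x < 1 ∧ x * z < 1 ∧ TQ x z ≤ 2 / x ∧ 0 < TQ x z := by
  obtain ⟨h1, h2, h3⟩ := D_facts hx hz hs
  have hT0 : 0 ≤ TQ x z := tsum_nonneg (w_nonneg hx.le hz.le)
  have hh0 : 0 ≤ hQ x z := tsum_nonneg (fun q => L2_nonneg (h1 q))
  have hxz : x * z < 1 := by
    have := h1 (F 0)
    unfold w at this
    rw [qsize_F, qleaves_F_zero] at this
    simpa using this
  have he1 : 1 + TQ x z + TQ x z ^ 2 / 2 ≤ Real.exp (TQ x z + hQ x z) := by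
    refine (Real.quadratic_le_exp_of_nonneg hT0).trans (Real.exp_le_exp.2 (by linarith))
  have h4 : x * (1 + TQ x z + TQ x z ^ 2 / 2) ≤ x * Real.exp (TQ x z + hQ x z) := by gcongr
  have hxz0 : 0 < x * z := mul_pos hx hz
  have h5 : x * z + x * TQ x z + x * (TQ x z ^ 2 / 2) ≤ TQ x z := by nlinarith
  have h6 : 0 ≤ x * (TQ x z ^ 2 / 2) := by positivity
  have h7 : 0 ≤ x * TQ x z := by positivity
  have hTpos : 0 < TQ x z := by linarith
  refine ⟨?_, hxz, ?_, hTpos⟩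
  · by_contra h
    push Not at h
    nlinarith
  · rw [le_div_iff₀ hx]
    by_contra h
    push Not at h
    nlinarith

/-! facts on `r` -/

theorem rset (z : ℝ) (hz : 0 < z) : {x : ℝ | 0 < x ∧
    Summable (fun p : ℕ × ℕ => (aCount p.1 p.2 : ℝ) * x ^ p.1 * z ^ p.2)} =
    {x : ℝ | 0 < x ∧ Summable (w x z)} := by
  ext x
  simp only [Set.mem_ofPred_eq]
  constructor
  · rintro ⟨h1, h2⟩; exact ⟨h1, (summable_iff h1.le hz.le).1 h2⟩
  · rintro ⟨h1, h2⟩; exact ⟨h1, (summable_iff h1.le hz.le).2 h2⟩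

theorem rset_bdd (z : ℝ) (hz : 0 < z) : BddAbove {x : ℝ | 0 < x ∧ Summable (w x z)} :=
  ⟨1, fun _ hx => (D_bounds hx.1 hz hx.2).1.le⟩

theorem le_r {x z : ℝ} (hx : 0 < x) (hz : 0 < z) (h : Summable (w x z)) : x ≤ rFun z := by
  unfold rFun
  rw [rset z hz]
  exact le_csSup (rset_bdd z hz) ⟨hx, h⟩

theorem r_pos {z : ℝ} (hz : 0 < z) : 0 < rFun z :=
  lt_of_lt_of_le (by positivity) (le_r (by positivity) hz (crude hz))

theorem D_lt {x z : ℝ} (hx : 0 < x) (hz : 0 < z) (h : x < rFun z) : Summable (w x z) := by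
  unfold rFun at h
  rw [rset z hz] at h
  have hne : {x : ℝ | 0 < x ∧ Summable (w x z)}.Nonempty :=
    ⟨1 / (2 * (z + 1)), by positivity, crude hz⟩
  obtain ⟨y, hy, hxy⟩ := exists_lt_of_lt_csSup hne h
  exact D_mono hx.le hz.le hxy.le le_rfl hy.2

theorem D_r {z : ℝ} (hz : 0 < z) : Summable (w (rFun z) z) := by
  have hr := r_pos hz
  apply summable_of_sum_le (c := 2 / rFun z) (w_nonneg hr.le hz.le)
  intro S
  have t1 : Tendsto (fun x : ℝ => ∑ q ∈ S, w x z q) (𝓝[<] (rFun z))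
      (𝓝 (∑ q ∈ S, w (rFun z) z q)) := by
    have : Continuous (fun x : ℝ => ∑ q ∈ S, w x z q) := by
      unfold w; fun_prop
    exact (this.tendsto _).mono_left nhdsWithin_le_nhds
  have t2 : Tendsto (fun x : ℝ => 2 / x) (𝓝[<] (rFun z)) (𝓝 (2 / rFun z)) := by
    have : ContinuousAt (fun x : ℝ => 2 / x) (rFun z) :=
      continuousAt_const.div continuousAt_id hr.ne'
    exact this.tendsto.mono_left nhdsWithin_le_nhds
  refine le_of_tendsto_of_tendsto t1 t2 ?_
  have hm : Set.Ioo 0 (rFun z) ∈ 𝓝[<] (rFun z) := Ioo_mem_nhdsLT hr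
  filter_upwards [hm] with x hx
  have hD := D_lt hx.1 hz hx.2
  exact (hD.sum_le_tsum S (fun q _ => w_nonneg hx.1.le hz.le q)).trans (D_bounds hx.1 hz hD).2.2.1

/-! slack -/

theorem w_le_pow {x z : ℝ} (hx : 0 ≤ x) (hz : 0 ≤ z) (q : Q) :
    w x z q ≤ (max x (x * z)) ^ qsize q := by
  unfold w
  have h1 : z ^ qleaves q ≤ (max 1 z) ^ qsize q :=
    (pow_le_pow_left₀ hz (le_max_right _ _) _).trans
      (pow_le_pow_right₀ (le_max_left _ _) (qleaves_le q))
  calc x ^ qsize q * z ^ qleaves q ≤ x ^ qsize q * (max 1 z) ^ qsize q := by gcongr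
    _ = (max x (x * z)) ^ qsize q := by
      rw [← mul_pow, mul_max_of_nonneg _ _ hx, mul_one]

theorem n_pow_le {ρ : ℝ} (h0 : 0 ≤ ρ) (h1 : ρ < 1) (n : ℕ) : (n : ℝ) * ρ ^ n ≤ 1 / (1 - ρ) := by
  have h2 : (n : ℝ) * ρ ^ n ≤ ∑ i ∈ Finset.range n, ρ ^ i := by
    rw [← Finset.card_range n, ← nsmul_eq_mul, Finset.card_range]
    conv_lhs => rw [← Finset.card_range n]
    apply Finset.card_nsmul_le_sum
    intro i hi
    rw [Finset.card_range]
    exact pow_le_pow_of_le_one h0 h1.le (Finset.mem_range.1 hi).le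
  refine h2.trans ?_
  rw [one_div, ← tsum_geometric_of_lt_one h0 h1]
  exact (summable_geometric_of_lt_one h0 h1).sum_le_tsum _ (fun i _ => by positivity)

theorem slack {x z : ℝ} (hx : 0 < x) (hz : 0 < z) (hs : Summable (w x z)) :
    ∃ c > 1, ∃ ρ < 1, 0 ≤ ρ ∧ (∀ q, w (c * x) (c * z) q ≤ ρ) ∧
      Summable (fun q => (qsize q : ℝ) * (w (c * x) (c * z) q) ^ 2) := by
  obtain ⟨b1, b2, -, -⟩ := D_bounds hx hz hs
  set m := max x (x * z) with hm
  have hm1 : m < 1 := max_lt b1 b2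
  have hm0 : 0 < m := lt_max_of_lt_left hx
  have hc : ∃ c : ℝ, 1 < c ∧ c ^ 4 * m < 1 := by
    have hcont : ContinuousAt (fun c : ℝ => c ^ 4 * m) 1 := by fun_prop
    have h1 : ∀ᶠ c in 𝓝 (1 : ℝ), c ^ 4 * m < 1 :=
      hcont.eventually_lt continuousAt_const (by simpa using hm1)
    have h2 : ∀ᶠ c in 𝓝[>] (1 : ℝ), c ^ 4 * m < 1 := h1.filter_mono nhdsWithin_le_nhds
    obtain ⟨c, h3, h4⟩ := (h2.and self_mem_nhdsWithin).exists
    exact ⟨c, h4, h3⟩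
  obtain ⟨c, hc1, hcm⟩ := hc
  have hc0 : 0 < c := by linarith
  have hwc : ∀ q, w (c * x) (c * z) q ≤ (c ^ 2) ^ qsize q * w x z q := by
    intro q
    unfold w
    rw [mul_pow, mul_pow]
    have : c ^ qleaves q ≤ c ^ qsize q := pow_le_pow_right₀ hc1.le (qleaves_le q)
    calc c ^ qsize q * x ^ qsize q * (c ^ qleaves q * z ^ qleaves q)
        ≤ c ^ qsize q * x ^ qsize q * (c ^ qsize q * z ^ qleaves q) := by gcongr
      _ = _ := by rw [← pow_mul, mul_comm 2, pow_mul]; ring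
  have hwc0 : ∀ q, 0 ≤ w (c * x) (c * z) q := w_nonneg (by positivity) (by positivity)
  set ρ := c ^ 4 * m with hρ
  have hρ0 : 0 < ρ := by positivity
  refine ⟨c, hc1, ρ, hcm, hρ0.le, ?_, ?_⟩
  · intro q
    have h5 : c ^ 2 * m ≤ ρ := by
      rw [hρ]
      have : c ^ 2 ≤ c ^ 4 := pow_le_pow_right₀ hc1.le (by norm_num)
      gcongr
    calc w (c * x) (c * z) q ≤ (c ^ 2) ^ qsize q * m ^ qsize q := by
          refine (hwc q).trans ?_
          have := w_le_pow hx.le hz.le q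
          gcongr
      _ = (c ^ 2 * m) ^ qsize q := by rw [mul_pow]
      _ ≤ ρ ^ qsize q := by gcongr
      _ ≤ ρ ^ 1 := pow_le_pow_of_le_one hρ0.le hcm.le (qsize_pos q)
      _ = ρ := pow_one _
  · refine Summable.of_nonneg_of_le (fun q => by positivity) (fun q => ?_)
      (hs.mul_left (1 / (1 - ρ)))
    have hw := w_le_pow hx.le hz.le q
    have hw0 := w_nonneg hx.le hz.le q
    calc (qsize q : ℝ) * (w (c * x) (c * z) q) ^ 2
        ≤ (qsize q : ℝ) * ((c ^ 2) ^ qsize q * w x z q) ^ 2 := by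
          have := hwc q
          have := hwc0 q
          gcongr
      _ = (qsize q : ℝ) * ((c ^ 4) ^ qsize q * w x z q) * w x z q := by
          rw [mul_pow, ← pow_mul, ← pow_mul, ← pow_mul]; ring
      _ ≤ (qsize q : ℝ) * ((c ^ 4) ^ qsize q * m ^ qsize q) * w x z q := by gcongr
      _ = (qsize q : ℝ) * ρ ^ qsize q * w x z q := by rw [hρ, mul_pow]
      _ ≤ 1 / (1 - ρ) * w x z q := by
          have := n_pow_le hρ0.le hcm (qsize q)
          gcongr

end GT

open Filter Topology

namespace GT

noncomputable def L2c (u : ℂ) : ℂ := -Complex.log (1 - u) - u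

noncomputable def uC (q : Q) (p : ℂ × ℂ) : ℂ := p.2 ^ qsize q * p.1 ^ qleaves q

noncomputable def hC (p : ℂ × ℂ) : ℂ := ∑' q, L2c (uC q p)

noncomputable def dC (q : Q) (p : ℂ × ℂ) : ℂ × ℂ →L[ℂ] ℂ :=
  (uC q p / (1 - uC q p)) •
    (((qsize q : ℂ) * p.2 ^ (qsize q - 1) * p.1 ^ qleaves q) • ContinuousLinearMap.snd ℂ ℂ ℂ +
      (p.2 ^ qsize q * ((qleaves q : ℂ) * p.1 ^ (qleaves q - 1))) • ContinuousLinearMap.fst ℂ ℂ ℂ)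

theorem L2c_deriv {u : ℂ} (hu : ‖u‖ < 1) : HasDerivAt L2c (u / (1 - u)) u := by
  have hm : 1 - u ∈ Complex.slitPlane := by
    have := Complex.mem_slitPlane_of_norm_lt_one (z := -u) (by simpa using hu)
    simpa [sub_eq_add_neg] using this
  have h0 : 1 - u ≠ 0 := Complex.slitPlane_ne_zero hm
  have h1 : HasDerivAt (fun u : ℂ => 1 - u) (-1) u := by
    simpa using (hasDerivAt_id u).const_sub 1
  have h2 := ((h1.clog hm).neg).sub (hasDerivAt_id u)
  convert! h2 using 1
  field_simp
  ring

theorem uC_deriv (q : Q) (p : ℂ × ℂ) : HasFDerivAt (uC q)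
    (((qsize q : ℂ) * p.2 ^ (qsize q - 1) * p.1 ^ qleaves q) • ContinuousLinearMap.snd ℂ ℂ ℂ +
      (p.2 ^ qsize q * ((qleaves q : ℂ) * p.1 ^ (qleaves q - 1))) •
        ContinuousLinearMap.fst ℂ ℂ ℂ) p := by
  have h1 : HasFDerivAt (fun p : ℂ × ℂ => p.2) (ContinuousLinearMap.snd ℂ ℂ ℂ) p :=
    hasFDerivAt_snd
  have h2 : HasFDerivAt (fun p : ℂ × ℂ => p.1) (ContinuousLinearMap.fst ℂ ℂ ℂ) p :=
    hasFDerivAt_fst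
  have h3 := (h1.pow (qsize q)).mul (h2.pow (qleaves q))
  convert! h3 using 1
  ext <;> simp
  ring

def UC (X Z : ℝ) : Set (ℂ × ℂ) := Metric.ball 0 Z ×ˢ Metric.ball 0 X

theorem UC_open (X Z : ℝ) : IsOpen (UC X Z) := Metric.isOpen_ball.prod Metric.isOpen_ball

theorem UC_conn (X Z : ℝ) : IsPreconnected (UC X Z) :=
  ((convex_ball (0 : ℂ) Z).isPreconnected).prod ((convex_ball (0 : ℂ) X).isPreconnected)

section
variable {X Z ρ : ℝ}

theorem uC_le {p : ℂ × ℂ} (hp : p ∈ UC X Z) (q : Q) : ‖uC q p‖ ≤ w X Z q := by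
  obtain ⟨h1, h2⟩ := hp
  rw [mem_ball_zero_iff] at h1 h2
  unfold uC w
  rw [norm_mul, norm_pow, norm_pow]
  have := h1.le
  have := h2.le
  have : 0 ≤ X := (norm_nonneg _).trans h2.le
  gcongr

theorem dC_le (hX : 0 < X) (hZ : 0 < Z) (hρ : ρ < 1) (hw : ∀ q, w X Z q ≤ ρ)
    {p : ℂ × ℂ} (hp : p ∈ UC X Z) (q : Q) :
    ‖dC q p‖ ≤ (1 / X + 1 / Z) / (1 - ρ) * ((qsize q : ℝ) * (w X Z q) ^ 2) := by
  have hu := uC_le hp q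
  obtain ⟨h1, h2⟩ := hp
  rw [mem_ball_zero_iff] at h1 h2
  have h1' := h1.le
  have h2' := h2.le
  have hw0 := w_nonneg hX.le hZ.le q
  have hρ' : 0 < 1 - ρ := by linarith
  have hq := hw q
  have a1 : ‖uC q p / (1 - uC q p)‖ ≤ w X Z q / (1 - ρ) := by
    rw [norm_div]
    have : 1 - ρ ≤ ‖1 - uC q p‖ := by
      have := norm_sub_norm_le (1 : ℂ) (uC q p)
      rw [norm_one] at this
      linarith
    gcongr
  have a2 : ‖((qsize q : ℂ) * p.2 ^ (qsize q - 1) * p.1 ^ qleaves q)‖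
      ≤ qsize q * w X Z q / X := by
    rw [norm_mul, norm_mul, norm_pow, norm_pow, Complex.norm_natCast]
    calc (qsize q : ℝ) * ‖p.2‖ ^ (qsize q - 1) * ‖p.1‖ ^ qleaves q
        ≤ qsize q * X ^ (qsize q - 1) * Z ^ qleaves q := by gcongr
      _ = qsize q * w X Z q / X := by
        unfold w
        obtain ⟨k, hk⟩ := Nat.exists_eq_add_of_lt (qsize_pos q)
        rw [hk]
        field_simp
        simp [pow_succ]
        try ring
  have a3 : ‖(p.2 ^ qsize q * ((qleaves q : ℂ) * p.1 ^ (qleaves q - 1)))‖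
      ≤ qsize q * w X Z q / Z := by
    rw [norm_mul, norm_mul, norm_pow, norm_pow, Complex.norm_natCast]
    calc ‖p.2‖ ^ qsize q * ((qleaves q : ℝ) * ‖p.1‖ ^ (qleaves q - 1))
        ≤ X ^ qsize q * ((qleaves q : ℝ) * Z ^ (qleaves q - 1)) := by gcongr
      _ = qleaves q * w X Z q / Z := by
        unfold w
        rcases Nat.eq_zero_or_pos (qleaves q) with h0 | h0
        · simp [h0]
        · obtain ⟨k, hk⟩ := Nat.exists_eq_add_of_lt h0
          rw [hk]
          field_simp
          simp [pow_succ]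
          try ring
      _ ≤ qsize q * w X Z q / Z := by
        have : (qleaves q : ℝ) ≤ qsize q := by exact_mod_cast qleaves_le q
        gcongr
  unfold dC
  rw [norm_smul]
  have a4 : ‖(((qsize q : ℂ) * p.2 ^ (qsize q - 1) * p.1 ^ qleaves q) •
      ContinuousLinearMap.snd ℂ ℂ ℂ +
      (p.2 ^ qsize q * ((qleaves q : ℂ) * p.1 ^ (qleaves q - 1))) •
        ContinuousLinearMap.fst ℂ ℂ ℂ)‖ ≤ qsize q * w X Z q / X + qsize q * w X Z q / Z := by
    refine (norm_add_le _ _).trans ?_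
    rw [norm_smul, norm_smul]
    have b1 := ContinuousLinearMap.norm_snd_le ℂ ℂ ℂ
    have b2 := ContinuousLinearMap.norm_fst_le ℂ ℂ ℂ
    have c1 := mul_le_mul a2 b1 (norm_nonneg _) (by positivity)
    have c2 := mul_le_mul a3 b2 (norm_nonneg _) (by positivity)
    linarith
  refine (mul_le_mul a1 a4 (norm_nonneg _) (by positivity)).trans (le_of_eq ?_)
  field_simp

theorem term_deriv (hρ : ρ < 1) (hw : ∀ q, w X Z q ≤ ρ)
    {p : ℂ × ℂ} (hp : p ∈ UC X Z) (q : Q) :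
    HasFDerivAt (fun p => L2c (uC q p)) (dC q p) p := by
  have hu : ‖uC q p‖ < 1 := ((uC_le hp q).trans (hw q)).trans_lt hρ
  exact (L2c_deriv hu).comp_hasFDerivAt p (uC_deriv q p)

theorem zero_mem (hX : 0 < X) (hZ : 0 < Z) : (0 : ℂ × ℂ) ∈ UC X Z :=
  ⟨by simpa using hZ, by simpa using hX⟩

theorem sum0 : Summable (fun q => L2c (uC q 0)) := by
  convert (summable_zero : Summable (fun _ : Q => (0 : ℂ))) using 2 with q
  have := (qsize_pos q).ne'
  simp [L2c, uC, this]

theorem hC_deriv (hX : 0 < X) (hZ : 0 < Z) (hρ : ρ < 1) (hw : ∀ q, w X Z q ≤ ρ)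
    (hs : Summable (fun q => (qsize q : ℝ) * (w X Z q) ^ 2)) {p : ℂ × ℂ} (hp : p ∈ UC X Z) :
    HasFDerivAt hC (∑' q, dC q p) p :=
  hasFDerivAt_tsum_of_isPreconnected (hs.mul_left _) (UC_open X Z) (UC_conn X Z)
    (fun q _ hp => term_deriv hρ hw hp q) (fun q _ hp => dC_le hX hZ hρ hw hp q)
    (zero_mem hX hZ) sum0 hp

theorem L2c_summable (hX : 0 < X) (hZ : 0 < Z) (hρ : ρ < 1) (hw : ∀ q, w X Z q ≤ ρ)
    (hs : Summable (fun q => (qsize q : ℝ) * (w X Z q) ^ 2)) {p : ℂ × ℂ} (hp : p ∈ UC X Z) :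
    Summable (fun q => L2c (uC q p)) :=
  summable_of_summable_hasFDerivAt_of_isPreconnected (𝕜 := ℂ) (f := fun q p => L2c (uC q p))
    (f' := dC) (u := fun q => (1 / X + 1 / Z) / (1 - ρ) * ((qsize q : ℝ) * (w X Z q) ^ 2))
    (hs.mul_left _) (UC_open X Z) (UC_conn X Z)
    (fun q _ hp => term_deriv hρ hw hp q) (fun q _ hp => dC_le hX hZ hρ hw hp q)
    (zero_mem hX hZ) sum0 hp

theorem hC_contDiff (hX : 0 < X) (hZ : 0 < Z) (hρ : ρ < 1) (hw : ∀ q, w X Z q ≤ ρ)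
    (hs : Summable (fun q => (qsize q : ℝ) * (w X Z q) ^ 2)) {p : ℂ × ℂ} (hp : p ∈ UC X Z) :
    ContDiffAt ℂ 1 hC p := by
  rw [contDiffAt_one_iff]
  refine ⟨fun p => ∑' q, dC q p, UC X Z, (UC_open X Z).mem_nhds hp, ?_,
    fun p hp => hC_deriv hX hZ hρ hw hs hp⟩
  refine continuousOn_tsum (fun q => ?_) (hs.mul_left _)
    (fun q _ hp => dC_le hX hZ hρ hw hp q)
  intro p hp
  have hu : ‖uC q p‖ < 1 := ((uC_le hp q).trans (hw q)).trans_lt hρ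
  have h0 : 1 - uC q p ≠ 0 := by
    intro h
    rw [sub_eq_zero] at h
    rw [← h] at hu
    simp at hu
  have hc : Continuous (uC q) := by unfold uC; fun_prop
  apply ContinuousAt.continuousWithinAt
  unfold dC
  refine ContinuousAt.smul (f := fun p => uC q p / (1 - uC q p)) ?_ ?_
  · exact hc.continuousAt.div (continuousAt_const.sub hc.continuousAt) h0
  · fun_prop

theorem real_mem {x z : ℝ} (hx : 0 < x) (hz : 0 < z) (hxX : x < X) (hzZ : z < Z) :
    ((z : ℂ), (x : ℂ)) ∈ UC X Z := by
  constructor <;> rw [mem_ball_zero_iff] <;> simp [abs_of_pos hx, abs_of_pos hz, hxX, hzZ]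

theorem uC_real (x z : ℝ) (q : Q) : uC q ((z : ℂ), (x : ℂ)) = ((w x z q : ℝ) : ℂ) := by
  unfold uC w; push_cast; rfl

theorem L2c_real {u : ℝ} (hu : u < 1) : L2c (u : ℂ) = ((L2 u : ℝ) : ℂ) := by
  unfold L2c L2
  push_cast
  rw [Complex.ofReal_log (by linarith)]
  push_cast
  rfl

theorem hC_real (hX : 0 < X) (hZ : 0 < Z) (hρ : ρ < 1) (hw : ∀ q, w X Z q ≤ ρ)
    (hs : Summable (fun q => (qsize q : ℝ) * (w X Z q) ^ 2)) {x z : ℝ}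
    (hx : 0 < x) (hz : 0 < z) (hxX : x < X) (hzZ : z < Z) :
    (∀ q, w x z q < 1) ∧ Summable (fun q => L2 (w x z q)) ∧
      hC ((z : ℂ), (x : ℂ)) = ((hQ x z : ℝ) : ℂ) := by
  have h1 : ∀ q, w x z q < 1 := fun q =>
    ((w_mono hx.le hz.le hxX.le hzZ.le q).trans (hw q)).trans_lt hρ
  have he : ∀ q, L2c (uC q ((z : ℂ), (x : ℂ))) = ((L2 (w x z q) : ℝ) : ℂ) := fun q => by
    rw [uC_real, L2c_real (h1 q)]
  refine ⟨h1, ?_, ?_⟩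
  · have := L2c_summable hX hZ hρ hw hs (real_mem hx hz hxX hzZ)
    simp_rw [he] at this
    exact Complex.summable_ofReal.1 this
  · unfold hC hQ
    simp_rw [he]
    rw [Complex.ofReal_tsum]

theorem hx_real (hX : 0 < X) (hZ : 0 < Z) (hρ : ρ < 1) (hw : ∀ q, w X Z q ≤ ρ)
    (hs : Summable (fun q => (qsize q : ℝ) * (w X Z q) ^ 2)) {x z : ℝ}
    (hx : 0 < x) (hz : 0 < z) (hxX : x < X) (hzZ : z < Z) :
    ∃ d : ℝ, 0 ≤ d ∧ (∑' q, dC q ((z : ℂ), (x : ℂ))) (0, 1) = (d : ℂ) := by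
  have h1 := (hC_real hX hZ hρ hw hs hx hz hxX hzZ).1
  refine ⟨∑' q, w x z q / (1 - w x z q) * (qsize q * x ^ (qsize q - 1) * z ^ qleaves q), ?_, ?_⟩
  · refine tsum_nonneg (fun q => ?_)
    have := h1 q
    have : 0 ≤ 1 - w x z q := by linarith
    have := w_nonneg hx.le hz.le q
    positivity
  · have hsum : Summable (fun q => dC q ((z : ℂ), (x : ℂ))) :=
      Summable.of_norm_bounded (hs.mul_left _)
        (fun q => dC_le hX hZ hρ hw (real_mem hx hz hxX hzZ) q)
    have e := ContinuousLinearMap.map_tsum (ContinuousLinearMap.apply ℂ ℂ ((0, 1) : ℂ × ℂ)) hsum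
    simp only [ContinuousLinearMap.apply_apply] at e
    rw [e, Complex.ofReal_tsum]
    congr 1
    ext q
    simp [dC, uC_real]

end

/-- `h` agrees with the series over trees. -/
theorem hReal_eq {x z : ℝ} (hx : 0 < x) (hz : 0 < z) (h1 : ∀ q, w x z q < 1)
    (h2 : Summable (fun q => L2 (w x z q))) : hReal x z = hQ x z := by
  have hw0 := w_nonneg hx.le hz.le
  have hp : ∀ (m : ℕ) q, w (x ^ m) (z ^ m) q = w x z q ^ m := by
    intro m q
    unfold w
    rw [mul_pow, ← pow_mul, ← pow_mul, ← pow_mul, ← pow_mul, mul_comm m, mul_comm m]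
  have hL : ∀ q, HasSum (fun k : ℕ => w x z q ^ (k + 2) / ((k : ℝ) + 2)) (L2 (w x z q)) := by
    intro q
    have := Real.hasSum_pow_div_log_of_abs_lt_one (x := w x z q)
      (by rw [abs_of_nonneg (hw0 q)]; exact h1 q)
    rw [← hasSum_nat_add_iff' 1] at this
    unfold L2
    convert! this using 1
    · ext k; push_cast; ring_nf
    · simp
  have hS : Summable (fun p : Q × ℕ => w x z p.1 ^ (p.2 + 2) / ((p.2 : ℝ) + 2)) := by
    rw [summable_prod_of_nonneg]
    · refine ⟨fun q => (hL q).summable, ?_⟩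
      convert h2 using 2 with q
      exact (hL q).tsum_eq
    · intro p
      have := hw0 p.1
      simp only [Pi.zero_apply]
      positivity
  have := Summable.tsum_comm (f := fun (q : Q) (k : ℕ) => w x z q ^ (k + 2) / ((k : ℝ) + 2)) hS
  unfold hReal hQ
  simp_rw [fun q => ((hL q).tsum_eq).symm]
  rw [← this]
  congr 1
  ext k
  rw [Treal_eq (by positivity) (by positivity), tsum_div_const]
  simp_rw [hp]

end GT

open Filter Topology

namespace GT

theorem slack_r {z : ℝ} (hz : 0 < z) : ∃ X Z ρ : ℝ, rFun z < X ∧ z < Z ∧ ρ < 1 ∧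
    (∀ q, w X Z q ≤ ρ) ∧ Summable (fun q => (qsize q : ℝ) * (w X Z q) ^ 2) := by
  have hr := r_pos hz
  obtain ⟨c, hc, ρ, hρ, -, h1, h2⟩ := slack hr hz (D_r hz)
  exact ⟨c * rFun z, c * z, ρ, by nlinarith, by nlinarith, hρ, h1, h2⟩

theorem E_le {z : ℝ} (hz : 0 < z) : TQ (rFun z) z + rFun z - rFun z * z ≤ 1 := by
  have hr := r_pos hz
  have hD := D_r hz
  obtain ⟨h1, h2, h3⟩ := D_facts hr hz hD
  obtain ⟨-, -, -, hT⟩ := D_bounds hr hz hD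
  set r := rFun z
  set T := TQ r z with hTdef
  set E := T + r - r * z with hE
  by_contra hlt
  push Not at hlt
  have hE' : r * Real.exp (T + hQ r z) = E := by linarith
  have hl : 0 < Real.log E := Real.log_pos hlt
  set δ := min T (Real.log E)
  have hδ : 0 < δ := lt_min hT hl
  have hδT : δ ≤ T := min_le_left _ _
  have hδE : Real.exp δ ≤ E := by
    rw [← Real.le_log_iff_exp_le (by linarith)]; exact min_le_right _ _
  have e1 : Real.exp (T - δ + hQ r z) * Real.exp δ = Real.exp (T + hQ r z) := by
    rw [← Real.exp_add]; congr 1; ring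
  have e2 := Real.add_one_le_exp δ
  have key : r * Real.exp (T - δ + hQ r z) ≤ E - δ := by
    have e3 : r * Real.exp (T - δ + hQ r z) * Real.exp δ = E := by
      rw [mul_assoc, e1, hE']
    have e4 : E ≤ (E - δ) * Real.exp δ := by nlinarith
    have : r * Real.exp (T - δ + hQ r z) * Real.exp δ ≤ (E - δ) * Real.exp δ := by linarith
    exact le_of_mul_le_mul_right this (Real.exp_pos _)
  have := (super_exp hr hz (y := T - δ) (by linarith) h1 h2 (by linarith)).2
  rw [← hTdef] at this
  linarith

theorem hQ_cont {z : ℝ} (hz : 0 < z) : ContinuousAt (fun x => hQ x z) (rFun z) := by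
  have hr := r_pos hz
  obtain ⟨X, Z, ρ, hX, hZ, hρ, h1, h2⟩ := slack_r hz
  have hX0 : 0 < X := hr.trans hX
  have hZ0 : 0 < Z := hz.trans hZ
  have hc : ContinuousAt hC ((z : ℂ), ((rFun z : ℝ) : ℂ)) :=
    (hC_deriv hX0 hZ0 hρ h1 h2 (real_mem hr hz hX hZ)).continuousAt
  have hc2 : ContinuousAt (fun x : ℝ => (hC ((z : ℂ), (x : ℂ))).re) (rFun z) := by
    have hf : ContinuousAt (fun x : ℝ => ((z : ℂ), (x : ℂ))) (rFun z) := by fun_prop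
    have := ContinuousAt.comp (f := fun x : ℝ => ((z : ℂ), (x : ℂ))) (g := hC) hc hf
    exact Complex.continuous_re.continuousAt.comp this
  refine hc2.congr ?_
  filter_upwards [Ioo_mem_nhds hr hX] with x hx
  rw [(hC_real hX0 hZ0 hρ h1 h2 hx.1 hz hx.2 hZ).2.2, Complex.ofReal_re]

theorem E_ge {z : ℝ} (hz : 0 < z) : 1 ≤ TQ (rFun z) z + rFun z - rFun z * z := by
  have hr := r_pos hz
  have hD := D_r hz
  obtain ⟨h1, h2, h3⟩ := D_facts hr hz hD
  obtain ⟨-, -, -, hT⟩ := D_bounds hr hz hD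
  have hcont := hQ_cont hz
  obtain ⟨X, Z, ρ, hX, hZ, hρ, s1, s2⟩ := slack_r hz
  have hX0 : 0 < X := hr.trans hX
  have hZ0 : 0 < Z := hz.trans hZ
  set r := rFun z with hrdef
  set T := TQ r z with hTdef
  set E := T + r - r * z with hE
  by_contra hlt
  push Not at hlt
  have hE' : r * Real.exp (T + hQ r z) = E := by linarith
  have hE0 : 0 < E := by rw [← hE']; positivity
  have hl : Real.log E < 0 := Real.log_neg hE0 hlt
  set ε := -Real.log E / 2 with hε
  have hε0 : 0 < ε := by linarith
  have hEε : E * Real.exp ε < 1 := by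
    rw [← Real.exp_log hE0, ← Real.exp_add]
    rw [Real.exp_lt_one_iff]
    linarith
  have key : r * Real.exp (T + ε + hQ r z) < E + ε := by
    have e1 : Real.exp (T + ε + hQ r z) = Real.exp (T + hQ r z) * Real.exp ε := by
      rw [← Real.exp_add]; congr 1; ring
    rw [e1, ← mul_assoc, hE']
    have e2 : Real.exp ε - 1 ≤ ε * Real.exp ε := by
      have a := Real.add_one_le_exp (-ε)
      have b : Real.exp (-ε) * Real.exp ε = 1 := by rw [← Real.exp_add]; simp
      have c := Real.exp_pos ε
      nlinarith
    nlinarith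
  have hev : ∀ᶠ x in 𝓝 r, x * z + x * Real.exp (T + ε + hQ x z) < (T + ε) + x := by
    have c1 : ContinuousAt (fun x => x * z + x * Real.exp (T + ε + hQ x z)) r := by
      refine (continuousAt_id.mul continuousAt_const).add (continuousAt_id.mul ?_)
      exact Real.continuous_exp.continuousAt.comp (continuousAt_const.add hcont)
    have c2 : ContinuousAt (fun x => (T + ε) + x) r := by fun_prop
    exact c1.eventually_lt c2 (by show r * z + r * Real.exp (T + ε + hQ r z) < T + ε + r; linarith)
  have hev2 : ∀ᶠ x in 𝓝[>] r, x * z + x * Real.exp (T + ε + hQ x z) < (T + ε) + x :=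
    hev.filter_mono nhdsWithin_le_nhds
  obtain ⟨x, hx1, hx2⟩ := (hev2.and (Ioo_mem_nhdsGT hX)).exists
  have hx0 : 0 < x := hr.trans hx2.1
  obtain ⟨f1, f2, -⟩ := hC_real hX0 hZ0 hρ s1 s2 hx0 hz hx2.2 hZ
  have hs := (super_exp hx0 hz (y := T + ε) (by linarith) f1 f2 hx1.le).1
  have := le_r hx0 hz hs
  exact absurd hx2.1 (not_lt.2 this)

theorem TQ_r {z : ℝ} (hz : 0 < z) : TQ (rFun z) z = 1 + rFun z * (z - 1) := by
  have := E_le hz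
  have := E_ge hz
  linarith

theorem eq_r {z : ℝ} (hz : 0 < z) :
    rFun z * Real.exp (1 + (z - 1) * rFun z + hQ (rFun z) z) = 1 := by
  have h3 := (D_facts (r_pos hz) hz (D_r hz)).2.2
  have h := TQ_r hz
  rw [h] at h3
  rw [mul_comm (z - 1)]
  linarith

/-! continuity of `r` -/

theorem r_anti {z z' : ℝ} (hz : 0 < z) (h : z ≤ z') : rFun z' ≤ rFun z :=
  le_r (r_pos (hz.trans_le h)) hz
    (D_mono (r_pos (hz.trans_le h)).le hz.le le_rfl h (D_r (hz.trans_le h)))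

theorem r_mul_mono {z z' : ℝ} (hz : 0 < z) (h : z ≤ z') : rFun z * z ≤ rFun z' * z' := by
  have hz' := hz.trans_le h
  have hr := r_pos hz
  have hx : 0 < rFun z * z / z' := by positivity
  have : Summable (w (rFun z * z / z') z') := by
    refine Summable.of_nonneg_of_le (w_nonneg hx.le hz'.le) (fun q => ?_) (D_r hz)
    obtain ⟨m, hm⟩ := Nat.exists_eq_add_of_le (qleaves_le q)
    unfold w
    have hle : rFun z * z / z' ≤ rFun z := by
      rw [div_le_iff₀ hz']; gcongr
    rw [hm, pow_add, pow_add]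
    calc (rFun z * z / z') ^ qleaves q * (rFun z * z / z') ^ m * z' ^ qleaves q
        = (rFun z * z / z' * z') ^ qleaves q * (rFun z * z / z') ^ m := by rw [mul_pow]; ring
      _ = (rFun z * z) ^ qleaves q * (rFun z * z / z') ^ m := by
        rw [div_mul_cancel₀ _ hz'.ne']
      _ ≤ (rFun z * z) ^ qleaves q * (rFun z) ^ m := by gcongr
      _ = _ := by rw [mul_pow]; ring
  have := le_r hx hz' this
  rwa [div_le_iff₀ hz'] at this

theorem r_cont {z : ℝ} (hz : 0 < z) : ContinuousAt rFun z := by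
  have c1 : Tendsto (fun y => min (rFun z) (rFun z * z / y)) (𝓝 z) (𝓝 (rFun z)) := by
    have : ContinuousAt (fun y => min (rFun z) (rFun z * z / y)) z :=
      continuousAt_const.min (continuousAt_const.div continuousAt_id hz.ne')
    have h := this.tendsto
    simpa [mul_div_cancel_right₀ _ hz.ne'] using h
  have c2 : Tendsto (fun y => max (rFun z) (rFun z * z / y)) (𝓝 z) (𝓝 (rFun z)) := by
    have : ContinuousAt (fun y => max (rFun z) (rFun z * z / y)) z :=
      continuousAt_const.max (continuousAt_const.div continuousAt_id hz.ne')
    have h := this.tendsto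
    simpa [mul_div_cancel_right₀ _ hz.ne'] using h
  refine tendsto_of_tendsto_of_tendsto_of_le_of_le' c1 c2 ?_ ?_
  · filter_upwards [Ioi_mem_nhds hz] with y hy
    have hy : 0 < y := hy
    rcases le_total z y with h | h
    · refine (min_le_right _ _).trans ?_
      rw [div_le_iff₀ hy]
      exact r_mul_mono hz h
    · exact (min_le_left _ _).trans (r_anti hy h)
  · filter_upwards [Ioi_mem_nhds hz] with y hy
    have hy : 0 < y := hy
    rcases le_total z y with h | h
    · exact (r_anti hz h).trans (le_max_left _ _)
    · refine le_trans ?_ (le_max_right _ _)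
      rw [le_div_iff₀ hy]
      exact r_mul_mono hy h

noncomputable def GC (p : ℂ × ℂ) : ℂ := p.2 * Complex.exp (1 + (p.1 - 1) * p.2 + hC p)

theorem GC_real {x z : ℝ} (h : hC ((z : ℂ), (x : ℂ)) = ((hQ x z : ℝ) : ℂ)) :
    GC ((z : ℂ), (x : ℂ)) = ((x * Real.exp (1 + (z - 1) * x + hQ x z) : ℝ) : ℂ) := by
  unfold GC
  rw [h]
  push_cast
  rfl

theorem r_analytic {z : ℝ} (hz : 0 < z) : AnalyticAt ℝ rFun z := by
  have hr := r_pos hz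
  obtain ⟨X, Z, ρ, hX, hZ, hρ, s1, s2⟩ := slack_r hz
  have hX0 : 0 < X := hr.trans hX
  have hZ0 : 0 < Z := hz.trans hZ
  have hmem := real_mem hr hz hX hZ
  set u : ℂ × ℂ := ((z : ℂ), ((rFun z : ℝ) : ℂ)) with hu
  have hcd : ContDiffAt ℂ 1 hC u := hC_contDiff hX0 hZ0 hρ s1 s2 hmem
  have cdf : ContDiffAt ℂ 1 GC u := by
    unfold GC
    exact contDiffAt_snd.mul
      ((((contDiffAt_const.add ((contDiffAt_fst.sub contDiffAt_const).mul contDiffAt_snd))).add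
        hcd).cexp)
  have hd := hC_deriv hX0 hZ0 hρ s1 s2 hmem
  obtain ⟨d, hd0, hd1⟩ := hx_real hX0 hZ0 hρ s1 s2 hr hz hX hZ
  have hGu : GC u = 1 := by
    rw [hu, GC_real (hC_real hX0 hZ0 hρ s1 s2 hr hz hX hZ).2.2, eq_r hz]
    simp
  have hval : fderiv ℂ GC u (0, 1) =
      (((1 + rFun z * (z - 1)) / rFun z + d : ℝ) : ℂ) := by
    have g1 : HasFDerivAt (fun p : ℂ × ℂ => p.2) (ContinuousLinearMap.snd ℂ ℂ ℂ) u :=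
      hasFDerivAt_snd
    have g2 : HasFDerivAt (fun p : ℂ × ℂ => p.1) (ContinuousLinearMap.fst ℂ ℂ ℂ) u :=
      hasFDerivAt_fst
    have g3 := g1.mul (((((g2.sub_const 1).mul g1).const_add 1).add hd).cexp)
    have g4 := HasFDerivAt.fderiv (f := GC) g3
    rw [g4]
    have hr' : ((rFun z : ℝ) : ℂ) ≠ 0 := by exact_mod_cast hr.ne'
    have hexp : Complex.exp (1 + (u.1 - 1) * u.2 + hC u) = 1 / ((rFun z : ℝ) : ℂ) := by
      rw [eq_div_iff hr', mul_comm]; exact hGu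
    simp only [Pi.add_apply, Pi.mul_apply, hexp]
    simp only [add_apply, smul_apply, hd1,
      ContinuousLinearMap.coe_fst', ContinuousLinearMap.coe_snd', smul_eq_mul, hu]
    push_cast
    field_simp
    ring
  have hT : 0 < 1 + rFun z * (z - 1) := by
    rw [← TQ_r hz]; exact (D_bounds hr hz (D_r hz)).2.2.2
  have hne : fderiv ℂ GC u (0, 1) ≠ 0 := by
    rw [hval]
    have : 0 < ((1 + rFun z * (z - 1)) / rFun z + d) := by positivity
    exact_mod_cast this.ne'
  have hinv : (fderiv ℂ GC u ∘L .inr ℂ ℂ ℂ).IsInvertible := by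
    refine ⟨ContinuousLinearEquiv.unitsEquivAut ℂ (Units.mk0 _ hne), ?_⟩
    ext
    simp
  set ψ := cdf.implicitFunction one_ne_zero hinv with hψ
  have hψc : ContDiffAt ℂ 1 ψ (z : ℂ) := cdf.contDiffAt_implicitFunction one_ne_zero hinv
  have hψa : AnalyticAt ℂ ψ (z : ℂ) := by
    rw [Complex.analyticAt_iff_eventually_differentiableAt]
    have := hψc.eventually (by simp)
    filter_upwards [this] with y hy
    exact hy.differentiableAt (by simp)
  have hev := cdf.eventually_apply_eq_iff_implicitFunction one_ne_zero hinv
  have ht : Tendsto (fun y : ℝ => ((y : ℂ), ((rFun y : ℝ) : ℂ))) (𝓝 z) (𝓝 u) := by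
    have c := r_cont hz
    have : ContinuousAt (fun y : ℝ => ((y : ℂ), ((rFun y : ℝ) : ℂ))) z :=
      (Complex.continuous_ofReal.continuousAt).prodMk
        (Complex.continuous_ofReal.continuousAt.comp c)
    exact this
  have hev2 := ht.eventually hev
  have hre : ∀ᶠ y : ℝ in 𝓝 z, (ψ (y : ℂ)).re = rFun y := by
    have c := r_cont hz
    filter_upwards [hev2, Ioo_mem_nhds hz hZ, c.eventually (Iio_mem_nhds hX)] with y h1 h2 h3
    have hy : 0 < y := h2.1
    have := h1.1 (by
      rw [hGu, GC_real (hC_real hX0 hZ0 hρ s1 s2 (r_pos hy) hy h3 h2.2).2.2, eq_r hy]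
      simp)
    have h5 : ψ (y : ℂ) = ((rFun y : ℝ) : ℂ) := this
    rw [h5]
    simp
  have hana : AnalyticAt ℝ (fun y : ℝ => (ψ (y : ℂ)).re) z := by
    have a1 : AnalyticAt ℝ ψ (z : ℂ) := hψa.restrictScalars
    have a2 : AnalyticAt ℝ (fun y : ℝ => (y : ℂ)) z := Complex.ofRealCLM.analyticAt z
    have a3 : AnalyticAt ℝ (fun y : ℝ => ψ (y : ℂ)) z := AnalyticAt.fun_comp a1 a2
    exact (Complex.reCLM.analyticAt _).fun_comp a3
  exact hana.congr hre

end GT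

/-- Lemma 3: `r` is real-analytic on `(0,∞)`, and for `z > 0` the boundary
value `a(z) = T(r(z),z)` satisfies `a(z) = 1 + r(z)(z−1)` and
`r(z)·exp(1 + (z−1)r(z) + h(r(z),z)) = 1`. -/
theorem lemma3 :
    (∀ ζ : ℝ, 0 < ζ → AnalyticAt ℝ rFun ζ) ∧
    (∀ z : ℝ, 0 < z →
      Treal (rFun z) z = 1 + rFun z * (z - 1) ∧
      rFun z * Real.exp (1 + (z - 1) * rFun z + hReal (rFun z) z) = 1) := by
  refine ⟨fun ζ hζ => GT.r_analytic hζ, fun z hz => ?_⟩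
  have hr := GT.r_pos hz
  obtain ⟨h1, h2, -⟩ := GT.D_facts hr hz (GT.D_r hz)
  refine ⟨?_, ?_⟩
  · rw [GT.Treal_eq hr.le hz.le]
    exact GT.TQ_r hz
  · rw [GT.hReal_eq hr hz h1 h2]
    exact GT.eq_r hz
end
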